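/- arXiv:math/0112208 — 2 statements merged into one kernel-verified Lean document; each statement's English description precedes it below -/
import Mathlib

section
/- Let τ_1, …, τ_s be real polynomials in the variables (w, x) ∈ ℝ^k × ℝ^N, and let φ(w, x) be a fixed Boolean combination of the s atomic predicates, each of the form τ_j(w, x) = 0 or τ_j(w, x) > 0. For each w ∈ ℝ^k let A_w = {x ∈ ℝ^N : φ(w, x) holds}, and let 𝓐 = {A_w : w ∈ ℝ^k}. Suppose B ≥ 1 is an integer such that for every v ≥ 1 with s·v ≥ k, every choice of points x_1, …, x_v ∈ ℝ^N, every r ≤ k, every choice of r polynomials θ_1, …, θ_r from among the s·v polynomials τ_j(·, x_i) : ℝ^k → ℝ, and every regular value y ∈ ℝ^r of the map f = (θ_1, …, θ_r) : ℝ^k → ℝ^r, the preimage f⁻¹(y) has at most B connected components. Then every finite subset of ℝ^N shattered by 𝓐 has cardinality at most 2·lg B + 2k·lg(2es). -/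
open MvPolynomial
set_option linter.style.haveILetI false

section algebra
open KaehlerDifferential TensorProduct

theorem linInd_D_basis {K : Type*} [Field K] [Algebra ℝ K] (s : Type*) (b : s → K)
    (hb : IsTranscendenceBasis ℝ b) :
    LinearIndependent K (fun i => D ℝ K (b i)) := by
  letI : Algebra (MvPolynomial s ℝ) K := (aeval (R := ℝ) b).toAlgebra
  have hmap : ∀ p : MvPolynomial s ℝ, algebraMap _ K p = aeval b p := fun p => rfl
  haveI : IsScalarTower ℝ (MvPolynomial s ℝ) K := IsScalarTower.of_algebraMap_eq (fun r => by
    rw [hmap]; simp)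
  haveI : FaithfulSMul (MvPolynomial s ℝ) K := by
    rw [faithfulSMul_iff_algebraMap_injective]
    exact hb.1
  letI : Algebra (FractionRing (MvPolynomial s ℝ)) K := FractionRing.liftAlgebra _ _
  haveI : IsScalarTower (MvPolynomial s ℝ) (FractionRing (MvPolynomial s ℝ)) K :=
    FractionRing.isScalarTower_liftAlgebra _ _
  haveI h1 : Algebra.IsAlgebraic (MvPolynomial s ℝ) K := by
    have h := hb.isAlgebraic
    refine Algebra.IsAlgebraic.of_ringHom_of_comp_eq
      (hb.1.aevalEquiv : MvPolynomial s ℝ →+* Algebra.adjoin ℝ (Set.range b)) (RingHom.id K)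
      hb.1.aevalEquiv.surjective (fun _ _ h => h) ?_
    ext x
    · simp [hmap]
    · simp [hmap]
  haveI h2 : Algebra.IsAlgebraic (FractionRing (MvPolynomial s ℝ)) K :=
    (IsFractionRing.comap_isAlgebraic_iff (A := MvPolynomial s ℝ)).1 h1
  haveI : CharZero (FractionRing (MvPolynomial s ℝ)) := inferInstance
  haveI h3 : Algebra.FormallyEtale (FractionRing (MvPolynomial s ℝ)) K :=
    Algebra.FormallyEtale.of_isSeparable _ _
  haveI h4 : Algebra.FormallyEtale (MvPolynomial s ℝ) (FractionRing (MvPolynomial s ℝ)) :=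
    Algebra.FormallyEtale.of_isLocalization (nonZeroDivisors _)
  haveI h5 : Algebra.FormallyEtale (MvPolynomial s ℝ) K :=
    Algebra.FormallyEtale.comp _ (FractionRing (MvPolynomial s ℝ)) _
  let e := tensorKaehlerEquivOfFormallyEtale ℝ (MvPolynomial s ℝ) K
  let B := ((mvPolynomialBasis ℝ s).baseChange K).map e
  have : (fun i => D ℝ K (b i)) = B := by
    ext i
    have := tensorKaehlerEquivOfFormallyEtale_symm_D_algebraMap ℝ (MvPolynomial s ℝ) K (X i)
    rw [LinearEquiv.symm_apply_eq, hmap, aeval_X] at this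
    rw [this]
    simp [B, e]
  rw [this]
  exact B.linearIndependent

theorem linInd_D {K : Type*} [Field K] [Algebra ℝ K] {ι : Type*} (θ : ι → K)
    (h : AlgebraicIndependent ℝ θ) :
    LinearIndependent K (fun i => D ℝ K (θ i)) := by
  obtain ⟨t, ht, hb⟩ := exists_isTranscendenceBasis_superset (R := ℝ) h.coe_range
  have := linInd_D_basis t _ hb
  exact this.comp (fun i => ⟨θ i, ht ⟨i, rfl⟩⟩) (fun i j hij => h.injective (by simpa using hij))

theorem deriv_aeval {σ : Type*} [Fintype σ] {K M : Type*} [CommRing K] [Algebra ℝ K]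
    [AddCommGroup M] [Module K M] [Module ℝ M] [IsScalarTower ℝ K M]
    (d : Derivation ℝ K M) (z : σ → K) (p : MvPolynomial σ ℝ) :
    d (aeval z p) = ∑ j, aeval z (pderiv j p) • d (z j) := by
  classical
  induction p using MvPolynomial.induction_on with
  | C a => simp
  | add p q hp hq => simp [hp, hq, add_smul, Finset.sum_add_distrib]
  | mul_X p i hp =>
    simp only [map_mul, aeval_X, Derivation.leibniz, hp, pderiv_X, smul_eq_mul, map_add, add_smul,
      Finset.sum_add_distrib, Finset.smul_sum, mul_smul]
    congr 1
    rw [Finset.sum_eq_single i]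
    · simp
    · intro b _ hb
      simp [hb.symm]
    · simp

theorem alg_sard_prime {σ I : Type*} [Fintype σ] [Fintype I] (P : I → MvPolynomial σ ℝ) (i0 : I)
    (p : Ideal (MvPolynomial (σ ⊕ I) ℝ)) [p.IsPrime]
    (h0 : X (Sum.inr i0) - 1 ∈ p)
    (h1 : ∀ j, ∑ i, X (Sum.inr i) * rename Sum.inl (pderiv j (P i)) ∈ p) :
    ∃ q : MvPolynomial I ℝ, q ≠ 0 ∧ aeval (fun i => rename Sum.inl (P i)) q ∈ p := by
  let K := FractionRing (MvPolynomial (σ ⊕ I) ℝ ⧸ p)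
  let ψ : MvPolynomial (σ ⊕ I) ℝ →ₐ[ℝ] K :=
    (IsScalarTower.toAlgHom ℝ (MvPolynomial (σ ⊕ I) ℝ ⧸ p) K).comp (Ideal.Quotient.mkₐ ℝ p)
  have hψ : ∀ x, ψ x = 0 ↔ x ∈ p := by
    intro x
    simp only [ψ, AlgHom.comp_apply, IsScalarTower.coe_toAlgHom', Ideal.Quotient.mkₐ_eq_mk]
    rw [FaithfulSMul.algebraMap_eq_zero_iff, Ideal.Quotient.eq_zero_iff_mem]
  have key : ¬ AlgebraicIndependent ℝ (fun i => ψ (rename Sum.inl (P i))) := by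
    intro hA
    have hL := linInd_D _ hA
    rw [Fintype.linearIndependent_iff] at hL
    have h2 := hL (fun i => ψ (X (Sum.inr i))) ?_ i0
    · have h3 := (hψ _).2 h0
      simp [h2] at h3
    · have h4 : ∀ (r : MvPolynomial σ ℝ), ψ (rename Sum.inl r) =
        aeval (fun j => ψ (X (Sum.inl j))) r := by
        intro r
        rw [aeval_unique ψ, aeval_rename]
        congr 1
        simp [Function.comp_def]
      simp_rw [h4, deriv_aeval, Finset.smul_sum]
      rw [Finset.sum_comm]
      refine Finset.sum_eq_zero fun j _ => ?_
      simp_rw [smul_smul, ← Finset.sum_smul, ← h4, ← map_mul, ← map_sum]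
      rw [(hψ _).2 (h1 j), zero_smul]
  rw [algebraicIndependent_iff] at key
  push Not at key
  obtain ⟨q, hq, hq0⟩ := key
  refine ⟨q, hq0, ?_⟩
  rw [← hψ, ← hq, ← AlgHom.comp_apply, comp_aeval]

theorem alg_sard {σ I : Type*} [Fintype σ] [Fintype I] (P : I → MvPolynomial σ ℝ) :
    ∃ q : MvPolynomial I ℝ, q ≠ 0 ∧ ∀ (x : σ → ℝ) (l : I → ℝ), l ≠ 0 →
      (∀ j, ∑ i, l i * eval x (pderiv j (P i)) = 0) → eval (fun i => eval x (P i)) q = 0 := by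
  classical
  have step : ∀ i0 : I, ∃ q : MvPolynomial I ℝ, q ≠ 0 ∧ ∀ (x : σ → ℝ) (l : I → ℝ), l i0 = 1 →
      (∀ j, ∑ i, l i * eval x (pderiv j (P i)) = 0) → eval (fun i => eval x (P i)) q = 0 := by
    intro i0
    let J : Ideal (MvPolynomial (σ ⊕ I) ℝ) := Ideal.span (insert (X (Sum.inr i0) - 1)
      (Set.range fun j => ∑ i, X (Sum.inr i) * rename Sum.inl (pderiv j (P i))))
    have hfin := J.finite_minimalPrimes_of_isNoetherianRing
    have hq : ∀ p ∈ J.minimalPrimes, ∃ q : MvPolynomial I ℝ, q ≠ 0 ∧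
        aeval (fun i => rename (Sum.inl : σ → σ ⊕ I) (P i)) q ∈ p := by
      intro p hp
      haveI := hp.1.1
      refine alg_sard_prime P i0 p (hp.1.2 (Ideal.subset_span (by simp)))
        fun j => hp.1.2 (Ideal.subset_span (by simp))
    choose! q hq0 hq using hq
    refine ⟨∏ p ∈ hfin.toFinset, q p, Finset.prod_ne_zero_iff.2 fun p hp => hq0 p (by simpa using hp),
      fun x l hl hj => ?_⟩
    let ev : MvPolynomial (σ ⊕ I) ℝ →+* ℝ := eval (Sum.elim x l)
    have hren : ∀ r : MvPolynomial σ ℝ, ev (rename Sum.inl r) = eval x r := by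
      intro r; simp [ev, eval_rename, Function.comp_def]
    have hJ : J ≤ RingHom.ker ev := by
      rw [Ideal.span_le]
      rintro y (rfl | ⟨j, rfl⟩)
      · simp [ev, hl]
      · simp only [SetLike.mem_coe, RingHom.mem_ker, map_sum, map_mul, hren]
        simpa [ev] using hj j
    haveI : (RingHom.ker ev).IsPrime := RingHom.ker_isPrime ev
    obtain ⟨p, hp, hpk⟩ := Ideal.exists_minimalPrimes_le hJ
    rw [map_prod]
    refine Finset.prod_eq_zero (i := p) (by simpa using hp) ?_
    have h := hpk (hq p hp)
    rw [RingHom.mem_ker] at h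
    rw [← h]
    have : (ev.comp (aeval (R := ℝ) (fun i => rename (Sum.inl : σ → σ ⊕ I) (P i))).toRingHom) =
        eval (fun i => eval x (P i)) := by
      ext i
      · simp [ev]
      · simp [hren]
    rw [← this]; rfl
  choose q hq0 hq using step
  refine ⟨∏ i, q i, Finset.prod_ne_zero_iff.2 fun i _ => hq0 i, fun x l hl hj => ?_⟩
  obtain ⟨i0, hi0⟩ := Function.ne_iff.1 hl
  rw [map_prod]
  refine Finset.prod_eq_zero (Finset.mem_univ i0) (hq i0 x (fun i => (l i0)⁻¹ * l i) ?_ ?_)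
  · exact inv_mul_cancel₀ hi0
  · intro j
    simp_rw [mul_assoc, ← Finset.mul_sum, hj j, mul_zero]
end algebra
section nondeg
theorem taylor_one {σ : Type*} [Fintype σ] (x : σ → ℝ) (p : MvPolynomial σ ℝ) :
    p - C (eval x p) ∈ RingHom.ker (eval x) ∧
    p - C (eval x p) - ∑ j, C (eval x (pderiv j p)) * (X j - C (x j)) ∈
      Ideal.span (Set.range fun j => (X j - C (x j) : MvPolynomial σ ℝ)) ^ 2 ∧
    p - C (eval x p) ∈ Ideal.span (Set.range fun j => (X j - C (x j) : MvPolynomial σ ℝ)) := by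
  classical
  set m := Ideal.span (Set.range fun j => (X j - C (x j) : MvPolynomial σ ℝ)) with hm
  have hX : ∀ j, (X j - C (x j) : MvPolynomial σ ℝ) ∈ m := fun j => Ideal.subset_span ⟨j, rfl⟩
  refine ⟨by simp, ?_⟩
  induction p using MvPolynomial.induction_on with
  | C a => simp
  | add p q hp hq =>
    constructor
    · convert Ideal.add_mem _ hp.1 hq.1 using 1
      simp only [map_add, add_mul, Finset.sum_add_distrib]
      ring
    · convert Ideal.add_mem _ hp.2 hq.2 using 1
      simp only [map_add]; ring
  | mul_X p i hp =>
    have h2 : (p - C (eval x p)) * (X i - C (x i)) ∈ m ^ 2 := by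
      rw [sq]; exact Ideal.mul_mem_mul hp.2 (hX i)
    constructor
    · have h1 := Ideal.add_mem _ (Ideal.mul_mem_left _ (C (x i)) hp.1) h2
      convert h1 using 1
      have : ∑ j, C (eval x (pderiv j (p * X i))) * (X j - C (x j)) =
          C (eval x p) * (X i - C (x i)) +
          C (x i) * ∑ j, C (eval x (pderiv j p)) * (X j - C (x j)) := by
        simp only [Derivation.leibniz, pderiv_X, smul_eq_mul, map_add, map_mul, add_mul,
          Finset.sum_add_distrib, Finset.mul_sum, eval_X]
        congr 1
        · rw [Finset.sum_eq_single i]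
          · simp
          · intro b _ hb
            simp [hb.symm]
          · simp
        · refine Finset.sum_congr rfl fun j _ => by ring
      rw [this]
      simp only [map_mul, eval_X]
      ring
    · have h1 := Ideal.add_mem _ (Ideal.mul_mem_right (X i) _ hp.2)
        (Ideal.mul_mem_left _ (C (eval x p)) (hX i))
      convert h1 using 1
      simp only [map_mul, eval_X]
      ring

theorem finite_nondeg {σ : Type*} [Fintype σ] (P : σ → MvPolynomial σ ℝ) :
    {x : σ → ℝ | (∀ i, eval x (P i) = 0) ∧
      ∀ l : σ → ℝ, (∀ j, ∑ i, l i * eval x (pderiv j (P i)) = 0) → l = 0}.Finite := by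
  classical
  let I : Ideal (MvPolynomial σ ℝ) := Ideal.span (Set.range P)
  have hfin := I.finite_minimalPrimes_of_isNoetherianRing
  refine Set.Finite.of_finite_image (f := fun x => RingHom.ker (eval (R := ℝ) x)) (hfin.subset ?_) ?_
  · rintro _ ⟨x, ⟨hx, hl⟩, rfl⟩
    set m := Ideal.span (Set.range fun j => (X j - C (x j) : MvPolynomial σ ℝ)) with hm
    have hkm : RingHom.ker (eval x) = m := by
      apply le_antisymm
      · intro p hp
        have := (taylor_one x p).2.2
        rw [RingHom.mem_ker] at hp
        simpa [hp] using this
      · rw [hm, Ideal.span_le]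
        rintro _ ⟨j, rfl⟩
        simp
    have hprime : (RingHom.ker (eval (R := ℝ) x)).IsPrime := RingHom.ker_isPrime _
    have hIm : I ≤ RingHom.ker (eval x) := by
      rw [Ideal.span_le]
      rintro _ ⟨j, rfl⟩
      simpa using hx j
    refine ⟨⟨hprime, hIm⟩, ?_⟩
    rintro Q ⟨hQ, hIQ⟩ hQm
    change RingHom.ker (eval (R := ℝ) x) ≤ Q
    change Q ≤ RingHom.ker (eval (R := ℝ) x) at hQm
    rw [hkm] at hQm ⊢
    -- the Jacobian matrix is invertible
    let M : Matrix σ σ ℝ := fun i j => eval x (pderiv j (P i))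
    have hM : IsUnit M := by
      rw [← Matrix.vecMul_injective_iff_isUnit]
      rw [← Matrix.coe_vecMulLinear, injective_iff_map_eq_zero]
      intro l h
      apply hl
      intro j
      exact congrFun h j
    have hXQ : ∀ j, (X j - C (x j) : MvPolynomial σ ℝ) ∈ Q ⊔ m ^ 2 := by
      intro j
      have h1 : ∀ i, (∑ j, C (M i j) * (X j - C (x j)) : MvPolynomial σ ℝ) ∈ Q ⊔ m ^ 2 := by
        intro i
        have h := (taylor_one x (P i)).2.1
        rw [hx i, C_0, sub_zero] at h
        have h' := Ideal.sub_mem _ ((Ideal.mem_sup_left (hIQ (Ideal.subset_span ⟨i, rfl⟩)) : P i ∈ Q ⊔ m ^ 2))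
          (Ideal.mem_sup_right h)
        simpa [M] using h'
      have h2 : (X j - C (x j) : MvPolynomial σ ℝ) =
          ∑ i, C (M⁻¹ j i) * ∑ j, C (M i j) * (X j - C (x j)) := by
        simp_rw [Finset.mul_sum]
        rw [Finset.sum_comm]
        simp_rw [← mul_assoc, ← Finset.sum_mul, ← C_mul, ← map_sum]
        have h3 : ∀ y, ∑ i, M⁻¹ j i * M i y = (1 : Matrix σ σ ℝ) j y := by
          intro y
          rw [← Matrix.nonsing_inv_mul M ((Matrix.isUnit_iff_isUnit_det M).1 hM), Matrix.mul_apply]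
        simp_rw [h3, Matrix.one_apply]
        simp
      rw [h2]
      exact Ideal.sum_mem _ fun i _ => Ideal.mul_mem_left _ _ (h1 i)
    have hmQ : m ≤ Q ⊔ m ^ 2 := by
      rw [hm, Ideal.span_le]
      rintro _ ⟨j, rfl⟩
      exact hXQ j
    have hid : IsIdempotentElem (m.map (Ideal.Quotient.mk Q)) := by
      apply le_antisymm Ideal.mul_le_left
      rw [← Ideal.map_mul, ← sq]
      refine (Ideal.map_mono hmQ).trans ?_
      rw [Ideal.map_sup, Ideal.map_quotient_self, bot_sup_eq]
    rw [Ideal.isIdempotentElem_iff_eq_bot_or_top _ ((isNoetherianRing_iff_ideal_fg _).1 inferInstance _)] at hid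
    rcases hid with h | h
    · rwa [Ideal.map_eq_bot_iff_le_ker, Ideal.mk_ker] at h
    · exfalso
      have h3 := Ideal.comap_map_of_surjective' (Ideal.Quotient.mk Q) Ideal.Quotient.mk_surjective m
      rw [h, Ideal.comap_top, Ideal.mk_ker, sup_eq_left.2 hQm] at h3
      exact hprime.ne_top (hkm.trans h3.symm)
  · intro x _ y _ hxy
    ext j
    have : (X j - C (x j) : MvPolynomial σ ℝ) ∈ RingHom.ker (eval x) := by simp
    simp only at hxy
    rw [hxy] at this
    simp [sub_eq_zero] at this
    exact this.symm
end nondeg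
section analysis
open Topology Filter

theorem local_pre {E F : Type*} [NormedAddCommGroup E] [NormedSpace ℝ E] [CompleteSpace E]
    [NormedAddCommGroup F] [NormedSpace ℝ F] [FiniteDimensional ℝ F] {f : E → F} {f' : E →L[ℝ] F}
    {p : E} (hf : HasStrictFDerivAt f f' p) (hs : f'.range = ⊤) {O : Set E} (hO : O ∈ 𝓝 p) :
    ∃ W ∈ 𝓝 p, W ⊆ O ∧ ∀ Cv : Set F, Convex ℝ Cv → IsPreconnected (W ∩ f ⁻¹' Cv) := by
  let Φ := hf.implicitToOpenPartialHomeomorph f f' hs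
  have hfst : ∀ x, (Φ x).1 = f x := fun x => rfl
  have hp : Φ p = (f p, 0) := hf.implicitToOpenPartialHomeomorph_self hs
  have hps : p ∈ Φ.source := hf.mem_implicitToOpenPartialHomeomorph_source hs
  have hpt : (f p, (0 : f'.ker)) ∈ Φ.target := hf.mem_implicitToOpenPartialHomeomorph_target hs
  have hsymm : Φ.symm (f p, 0) = p := by rw [← hp]; exact Φ.left_inv hps
  have hnt : Φ.target ∩ Φ.symm ⁻¹' O ∈ 𝓝 (f p, (0 : f'.ker)) := by
    refine inter_mem (Φ.open_target.mem_nhds hpt) ?_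
    have := Φ.symm.continuousAt (x := (f p, 0)) hpt
    apply this
    rw [hsymm]; exact hO
  obtain ⟨ε, hε, hball⟩ := Metric.mem_nhds_iff.1 hnt
  refine ⟨Φ.source ∩ Φ ⁻¹' Metric.ball (f p, 0) ε, ?_, ?_, ?_⟩
  · refine inter_mem (Φ.open_source.mem_nhds hps) ?_
    apply Φ.continuousAt hps
    rw [hp]; exact Metric.ball_mem_nhds _ hε
  · rintro x ⟨hx, hxb⟩
    have := (hball hxb).2
    simpa [Φ.left_inv hx] using this
  · intro Cv hCv
    have : (Φ.source ∩ Φ ⁻¹' Metric.ball (f p, 0) ε) ∩ f ⁻¹' Cv =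
        Φ.symm '' (Metric.ball (f p, 0) ε ∩ (Cv ×ˢ Set.univ)) := by
      ext x
      constructor
      · rintro ⟨⟨hx, hxb⟩, hxc⟩
        exact ⟨Φ x, ⟨hxb, by simpa [hfst] using hxc⟩, Φ.left_inv hx⟩
      · rintro ⟨y, ⟨hyb, hyc⟩, rfl⟩
        have hyt := (hball hyb).1
        refine ⟨⟨Φ.map_target hyt, ?_⟩, ?_⟩
        · simpa [Φ.right_inv hyt] using hyb
        · rw [Set.mem_preimage, ← hfst, Φ.right_inv hyt]; exact hyc.1
    rw [this]
    refine IsPreconnected.image ?_ _ ?_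
    · exact ((convex_ball _ _).inter (hCv.prod convex_univ)).isPreconnected
    · exact Φ.continuousOn_symm.mono (fun y hy => (hball hy.1).1)

/-- the differential of a polynomial function -/
noncomputable def pD {σ : Type*} [Fintype σ] (p : MvPolynomial σ ℝ) (x : σ → ℝ) : (σ → ℝ) →L[ℝ] ℝ :=
  ∑ j, eval x (pderiv j p) • ContinuousLinearMap.proj (R := ℝ) (φ := fun _ : σ => ℝ) j

theorem pD_apply {σ : Type*} [Fintype σ] (p : MvPolynomial σ ℝ) (x v : σ → ℝ) :
    pD p x v = ∑ j, eval x (pderiv j p) * v j := by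
  simp [pD]

theorem hasStrictFDerivAt_eval {σ : Type*} [Fintype σ] (p : MvPolynomial σ ℝ) (x : σ → ℝ) :
    HasStrictFDerivAt (fun w => eval w p) (pD p x) x := by
  classical
  induction p using MvPolynomial.induction_on with
  | C a => simpa [pD] using hasStrictFDerivAt_const (𝕜 := ℝ) a x
  | add p q hp hq =>
    simp only [map_add]
    refine (hp.add hq).congr_fderiv ?_
    ext v; simp [pD_apply, add_mul, Finset.sum_add_distrib]
  | mul_X p i hp =>
    simp only [map_mul, eval_X]
    refine (hp.mul (hasStrictFDerivAt_apply (𝕜 := ℝ) (F' := fun _ : σ => ℝ) i x)).congr_fderiv ?_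
    symm
    ext v
    simp only [pD_apply, Derivation.leibniz, pderiv_X, smul_eq_mul, map_add, map_mul, add_mul,
          Finset.sum_add_distrib, eval_X, add_apply,
          smul_apply, ContinuousLinearMap.proj_apply, Finset.mul_sum]
    congr 1
    · rw [Finset.sum_eq_single i]
      · simp
      · intro b _ hb
        simp [hb.symm]
      · simp
    · refine Finset.sum_congr rfl fun j _ => by ring

/-- no nontrivial relation between the gradients -/
def Nondeg {σ I : Type*} [Fintype I] (P : I → MvPolynomial σ ℝ) (x : σ → ℝ) : Prop :=
  ∀ l : I → ℝ, (∀ j, ∑ i, l i * eval x (pderiv j (P i)) = 0) → l = 0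

theorem Nondeg.surj {σ I : Type*} [Fintype σ] [Fintype I] {P : I → MvPolynomial σ ℝ} {x : σ → ℝ}
    (h : Nondeg P x) : Function.Surjective (ContinuousLinearMap.pi fun i => pD (P i) x) := by
  classical
  by_contra hs
  have h1 : (ContinuousLinearMap.pi fun i => pD (P i) x).toLinearMap.range < ⊤ := by
    rw [lt_top_iff_ne_top]
    intro h2
    exact hs (LinearMap.range_eq_top.1 h2)
  obtain ⟨g, hg0, hg⟩ := Submodule.exists_le_ker_of_lt_top _ h1
  apply hg0
  have hgl : ∀ v, g v = ∑ i, v i * g (Pi.single i 1) := fun v => by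
    conv_lhs => rw [pi_eq_sum_univ' v]
    simp only [map_sum, map_smul, smul_eq_mul]
  have h3 := h (fun i => g (Pi.single i 1)) (fun j => by
    have h4 : g ((ContinuousLinearMap.pi fun i => pD (P i) x) (Pi.single j 1)) = 0 :=
      hg ⟨_, rfl⟩
    rw [hgl] at h4
    rw [← h4]
    refine Finset.sum_congr rfl fun i _ => ?_
    rw [ContinuousLinearMap.pi_apply, pD_apply]
    simp [Pi.single_apply, mul_comm])
  ext i
  simpa using congrFun h3 i

theorem hasStrictFDerivAt_evals {σ I : Type*} [Fintype σ] [Fintype I] (P : I → MvPolynomial σ ℝ)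
    (x : σ → ℝ) : HasStrictFDerivAt (fun w i => eval w (P i))
      (ContinuousLinearMap.pi fun i => pD (P i) x) x :=
  hasStrictFDerivAt_pi.2 fun i => hasStrictFDerivAt_eval (P i) x
end analysis
section finitecomp
open Topology Filter

/-- Each component of a regular fibre contains a solution of the Lagrange system. -/
theorem exists_lagrange {σ I : Type*} [Fintype σ] [Fintype I] (P : I → MvPolynomial σ ℝ)
    (a : σ → ℝ) (y : I → ℝ)
    (hreg : ∀ x, (∀ i, eval x (P i) = y i) → Nondeg P x)
    (Z : Set (σ → ℝ)) (hZ : Z = {x : σ → ℝ | ∀ i, eval x (P i) = y i}) (z : Z) :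
    ∃ x ∈ connectedComponent z, ∃ l : I → ℝ,
      ∀ j, x.1 j + ∑ i, l i * eval x.1 (pderiv j (P i)) = a j := by
  have hZc : IsClosed Z := by
    rw [hZ, Set.ofPred_forall]
    exact isClosed_iInter fun i => isClosed_eq (MvPolynomial.continuous_eval _) continuous_const
  let d : MvPolynomial σ ℝ := ∑ j, (X j - C (a j)) ^ 2
  have hd : ∀ x, eval x d = ∑ j, (x j - a j) ^ 2 := fun x => by simp [d]
  let T : Set (σ → ℝ) := Subtype.val '' (connectedComponent z)
  have hTc : IsClosed T := hZc.isClosedEmbedding_subtypeVal.isClosedMap _ isClosed_connectedComponent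
  have hzT : z.1 ∈ T := ⟨z, mem_connectedComponent, rfl⟩
  have hcomp : IsCompact (T ∩ {x | eval x d ≤ eval z.1 d}) := by
    refine Metric.isCompact_of_isClosed_isBounded
      (hTc.inter (isClosed_le (MvPolynomial.continuous_eval _) continuous_const)) ?_
    refine (Metric.isBounded_closedBall (x := a) (r := Real.sqrt (eval z.1 d))).subset ?_
    rintro x ⟨_, hx⟩
    rw [Metric.mem_closedBall, dist_pi_le_iff (Real.sqrt_nonneg _)]
    intro j
    rw [Real.dist_eq]
    apply Real.abs_le_sqrt
    refine le_trans ?_ hx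
    rw [hd]
    exact Finset.single_le_sum (f := fun j => (x j - a j) ^ 2) (fun _ _ => sq_nonneg _) (Finset.mem_univ j)
  obtain ⟨x0, ⟨hx0T, hx0d⟩, hmin⟩ := hcomp.exists_isMinOn ⟨z.1, hzT, le_refl (eval z.1 d)⟩
    (MvPolynomial.continuous_eval d).continuousOn
  have hminT : ∀ x ∈ T, eval x0 d ≤ eval x d := by
    intro x hx
    by_cases h : eval x d ≤ eval z.1 d
    · exact hmin ⟨hx, h⟩
    · exact le_trans hx0d (le_of_lt (not_le.1 h))
  obtain ⟨x, hxc, rfl⟩ := hx0T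
  have hxZ : ∀ i, eval x.1 (P i) = y i := by
    have := hZ.subset x.2
    exact this
  have hnd := hreg x.1 hxZ
  obtain ⟨W, hW, -, hWc⟩ := local_pre (hasStrictFDerivAt_evals P x.1)
    (LinearMap.range_eq_top.2 hnd.surj) (O := Set.univ) univ_mem
  have hWZ : W ∩ Z ⊆ T := by
    have h1 := hWc {y} (convex_singleton y)
    have h2 : W ∩ (fun w i => eval w (P i)) ⁻¹' {y} = W ∩ Z := by
      ext w; simp [hZ, _root_.funext_iff]
    rw [h2] at h1
    have h3 : IsPreconnected (Subtype.val ⁻¹' (W ∩ Z) : Set Z) := by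
      rw [← Topology.IsInducing.subtypeVal.isPreconnected_image]
      rw [Subtype.image_preimage_coe]
      rw [Set.inter_eq_right.2 Set.inter_subset_right]
      exact h1
    intro w hw
    have hxm : x ∈ (Subtype.val ⁻¹' (W ∩ Z) : Set Z) := ⟨mem_of_mem_nhds hW, x.2⟩
    have h4 := h3.subset_connectedComponent hxm
    rw [← connectedComponent_eq hxc] at h4
    exact ⟨⟨w, hw.2⟩, h4 hw, rfl⟩
  have hloc : IsLocalExtrOn (fun w => eval w d) {w | ∀ i, eval w (P i) = eval x.1 (P i)} x.1 := by
    left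
    have : {w : σ → ℝ | ∀ i, eval w (P i) = eval x.1 (P i)} = Z := by
      ext w; simp [hZ, hxZ]
    rw [this]
    change ∀ᶠ w in 𝓝[Z] x.1, eval x.1 d ≤ eval w d
    filter_upwards [mem_nhdsWithin_of_mem_nhds hW, self_mem_nhdsWithin] with w hw1 hw2
    exact hminT w (hWZ ⟨hw1, hw2⟩)
  obtain ⟨L, L0, hL, hsum⟩ := hloc.exists_multipliers_of_hasStrictFDerivAt
    (f := fun i w => eval w (P i))
    (fun i => hasStrictFDerivAt_eval (P i) x.1) (hasStrictFDerivAt_eval d x.1)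
  have hdj : ∀ j, eval x.1 (pderiv j d) = 2 * (x.1 j - a j) := by
    classical
    intro j
    simp only [d, map_sum, Derivation.leibniz_pow, map_sub, pderiv_X, pderiv_C]
    rw [Finset.sum_eq_single j]
    · simp
    · intro b _ hb
      simp [Pi.single_apply, hb.symm]
      try (intro h; exact absurd h hb)
    · simp
  have hj : ∀ j, ∑ i, L i * eval x.1 (pderiv j (P i)) + L0 * (2 * (x.1 j - a j)) = 0 := by
    classical
    intro j
    have := DFunLike.congr_fun hsum (Pi.single j 1)
    simpa [pD_apply, Pi.single_apply, hdj] using this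
  have hL0 : L0 ≠ 0 := by
    rintro rfl
    apply hL
    have := hnd L (fun j => by simpa using hj j)
    simp [this]
  refine ⟨x, hxc, fun i => (2 * L0)⁻¹ * L i, fun j => ?_⟩
  simp_rw [mul_assoc, ← Finset.mul_sum]
  have h := hj j
  have : ∑ i, L i * eval x.1 (pderiv j (P i)) = - (L0 * (2 * (x.1 j - a j))) := by linarith
  rw [this]
  field_simp
  ring

theorem finite_components {σ I : Type*} [Fintype σ] [Fintype I] (P : I → MvPolynomial σ ℝ) :
    ∃ q : MvPolynomial (σ ⊕ I) ℝ, q ≠ 0 ∧ ∀ (a : σ → ℝ) (y : I → ℝ), eval (Sum.elim a y) q ≠ 0 →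
      (∀ x, (∀ i, eval x (P i) = y i) → Nondeg P x) →
      Finite (ConnectedComponents {x : σ → ℝ | ∀ i, eval x (P i) = y i}) := by
  classical
  let F : σ ⊕ I → MvPolynomial (σ ⊕ I) ℝ := Sum.elim
    (fun j => X (Sum.inl j) + ∑ i, X (Sum.inr i) * rename Sum.inl (pderiv j (P i)))
    (fun i => rename Sum.inl (P i))
  obtain ⟨q, hq0, hq⟩ := alg_sard F
  refine ⟨q, hq0, fun a y hay hreg => ?_⟩
  have hfin := finite_nondeg (fun s => F s - C (Sum.elim a y s))
  set N := {x : σ ⊕ I → ℝ | (∀ i, eval x (F i - C (Sum.elim a y i)) = 0) ∧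
      ∀ l : σ ⊕ I → ℝ, (∀ j, ∑ i, l i * eval x (pderiv j (F i - C (Sum.elim a y i))) = 0) → l = 0}
    with hN
  have hmem : ∀ (x : σ → ℝ) (l : I → ℝ), (∀ i, eval x (P i) = y i) →
      (∀ j, x j + ∑ i, l i * eval x (pderiv j (P i)) = a j) → Sum.elim x l ∈ N := by
    intro x l hx hl
    have hF : ∀ s, eval (Sum.elim x l) (F s) = Sum.elim a y s := by
      rintro (j | i)
      · simp [F, eval_rename, Function.comp_def, hl]
      · simp [F, eval_rename, Function.comp_def, hx]
    refine ⟨fun s => by simp [hF], fun m hm => ?_⟩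
    by_contra hm0
    apply hay
    have := hq (Sum.elim x l) m hm0 (fun j => by simpa using hm j)
    simpa only [hF] using this
  haveI : Finite N := hfin
  choose x hx l hl using exists_lagrange P a y hreg _ rfl
  refine Finite.of_injective (β := N)
    (fun c => ⟨Sum.elim (x c.exists_rep.choose).1 (l c.exists_rep.choose),
      hmem _ _ (x c.exists_rep.choose).2 (hl _)⟩) ?_
  intro c c' h
  have h1 : (x c.exists_rep.choose) = (x c'.exists_rep.choose) := by
    apply Subtype.ext
    funext j
    have := congrFun (congrArg Subtype.val h) (Sum.inl j)
    simpa using this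
  have key : ∀ c : ConnectedComponents {x : σ → ℝ | ∀ i, eval x (P i) = y i},
      ((x c.exists_rep.choose : _) : ConnectedComponents _) = c := by
    intro c
    conv_rhs => rw [← c.exists_rep.choose_spec]
    exact ConnectedComponents.coe_eq_coe.2 (connectedComponent_eq (hx c.exists_rep.choose)).symm
  rw [← key c, ← key c', h1]
end finitecomp
section jump
open Topology Filter

theorem exists_trace {E : Type*} [TopologicalSpace E] (U M S : Set E)
    (hcl : ∀ p ∈ M, p ∈ closure (U ∩ S))
    (hloc : ∀ p ∈ M, ∃ W ∈ 𝓝 p, IsPreconnected (W ∩ (U ∩ S))) :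
    ∃ tr : LocallyConstant U ℝ →ₗ[ℝ] LocallyConstant M ℝ, ∀ f (p : M), ∃ W ∈ 𝓝 p.1,
      ∀ u : U, u.1 ∈ W → u.1 ∈ S → f u = tr f p := by
  have huniq : ∀ (f : LocallyConstant U ℝ) (p : M) (c c' : ℝ),
      (∃ W ∈ 𝓝 p.1, ∀ u : U, u.1 ∈ W → u.1 ∈ S → f u = c) →
      (∃ W ∈ 𝓝 p.1, ∀ u : U, u.1 ∈ W → u.1 ∈ S → f u = c') → c = c' := by
    rintro f p c c' ⟨W, hW, h⟩ ⟨W', hW', h'⟩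
    obtain ⟨x, ⟨hx1, hx2⟩, hx3, hx4⟩ := mem_closure_iff_nhds.1 (hcl p.1 p.2) _ (inter_mem hW hW')
    rw [← h ⟨x, hx3⟩ hx1 hx4, h' ⟨x, hx3⟩ hx2 hx4]
  have hex : ∀ (f : LocallyConstant U ℝ) (p : M), ∃ c : ℝ,
      ∃ W ∈ 𝓝 p.1, ∀ u : U, u.1 ∈ W → u.1 ∈ S → f u = c := by
    intro f p
    obtain ⟨W, hW, hpre⟩ := hloc p.1 p.2
    obtain ⟨x, hx1, hx3, hx4⟩ := mem_closure_iff_nhds.1 (hcl p.1 p.2) _ hW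
    refine ⟨f ⟨x, hx3⟩, W, hW, fun u hu hus => ?_⟩
    have h3 : IsPreconnected (Subtype.val ⁻¹' (W ∩ (U ∩ S)) : Set U) := by
      rw [← Topology.IsInducing.subtypeVal.isPreconnected_image]
      rw [Subtype.image_preimage_coe]
      convert hpre using 1
      ext w; simp; tauto
    exact f.isLocallyConstant.apply_eq_of_isPreconnected h3 ⟨hu, u.2, hus⟩ ⟨hx1, hx3, hx4⟩
  choose c hc using hex
  have hlc : ∀ f, IsLocallyConstant (c f) := by
    intro f
    rw [IsLocallyConstant.iff_eventually_eq]
    intro p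
    obtain ⟨W, hW, h⟩ := hc f p
    obtain ⟨V, hVW, hVo, hpV⟩ := mem_nhds_iff.1 hW
    filter_upwards [continuous_subtype_val.continuousAt.preimage_mem_nhds (hVo.mem_nhds hpV)]
      with p' hp'
    exact huniq f p' _ _ (hc f p') ⟨V, hVo.mem_nhds hp', fun u hu => h u (hVW hu)⟩
  refine ⟨{ toFun := fun f => ⟨c f, hlc f⟩, map_add' := ?_, map_smul' := ?_ }, fun f p => hc f p⟩
  · intro f g
    ext p
    obtain ⟨W, hW, h⟩ := hc f p
    obtain ⟨W', hW', h'⟩ := hc g p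
    refine huniq (f + g) p _ _ (hc _ p) ⟨W ∩ W', inter_mem hW hW', fun u hu hus => ?_⟩
    simp [h u hu.1 hus, h' u hu.2 hus]
  · intro r f
    ext p
    obtain ⟨W, hW, h⟩ := hc f p
    refine huniq (r • f) p _ _ (hc _ p) ⟨W, hW, fun u hu hus => ?_⟩
    simp [h u hu hus]

theorem rank_jump {E : Type*} [TopologicalSpace E] (A : Set E) (h : E → ℝ) (hh : Continuous h)
    (hcl : ∀ p ∈ A, h p = 0 → p ∈ closure (A ∩ {x | 0 < h x}) ∧ p ∈ closure (A ∩ {x | h x < 0}))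
    (hloc : ∀ p ∈ A, h p = 0 → ∃ W ∈ 𝓝 p, IsPreconnected (W ∩ (A ∩ {x | 0 < h x})) ∧
      IsPreconnected (W ∩ (A ∩ {x | h x < 0}))) :
    Module.rank ℝ (LocallyConstant ↥(A ∩ {x | h x ≠ 0}) ℝ) ≤
      Module.rank ℝ (LocallyConstant ↥A ℝ) +
      Module.rank ℝ (LocallyConstant ↥(A ∩ {x | h x = 0}) ℝ) := by
  set U := A ∩ {x | h x ≠ 0} with hU
  set M := A ∩ {x | h x = 0} with hM
  have e1 : U ∩ {x | 0 < h x} = A ∩ {x | 0 < h x} := by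
    ext x; simp only [hU, Set.mem_inter_iff, Set.mem_ofPred_eq]
    exact ⟨fun h => ⟨h.1.1, h.2⟩, fun h => ⟨⟨h.1, h.2.ne'⟩, h.2⟩⟩
  have e2 : U ∩ {x | h x < 0} = A ∩ {x | h x < 0} := by
    ext x; simp only [hU, Set.mem_inter_iff, Set.mem_ofPred_eq]
    exact ⟨fun h => ⟨h.1.1, h.2⟩, fun h => ⟨⟨h.1, h.2.ne⟩, h.2⟩⟩
  obtain ⟨tp, htp⟩ := exists_trace U M {x | 0 < h x} (fun p hp => by rw [e1]; exact (hcl p hp.1 hp.2).1)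
    (fun p hp => by
      obtain ⟨W, hW, h1, -⟩ := hloc p hp.1 hp.2
      exact ⟨W, hW, by rwa [e1]⟩)
  obtain ⟨tm, htm⟩ := exists_trace U M {x | h x < 0} (fun p hp => by rw [e2]; exact (hcl p hp.1 hp.2).2)
    (fun p hp => by
      obtain ⟨W, hW, -, h1⟩ := hloc p hp.1 hp.2
      exact ⟨W, hW, by rwa [e2]⟩)
  let J := tp - tm
  let incl : C(U, A) := ⟨Set.inclusion Set.inter_subset_left, continuous_inclusion _⟩
  let res : LocallyConstant A ℝ →ₗ[ℝ] LocallyConstant U ℝ :=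
    { toFun := fun f => f.comap incl
      map_add' := fun f g => by ext; simp
      map_smul' := fun r f => by ext; simp }
  have hres : ∀ f u, res f u = f (incl u) := fun f u => by simp [res]
  have hker : LinearMap.ker J ≤ LinearMap.range res := by
    classical
    intro f hf
    have hf' : tp f = tm f := by
      have : tp f - tm f = 0 := hf
      exact sub_eq_zero.1 this
    let g : A → ℝ := fun a => if ha : h a.1 = 0 then tp f ⟨a.1, a.2, ha⟩ else f ⟨a.1, a.2, ha⟩
    have hg : IsLocallyConstant g := by
      rw [IsLocallyConstant.iff_eventually_eq]
      intro a
      by_cases ha : h a.1 = 0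
      · obtain ⟨W1, hW1, h1⟩ := htp f ⟨a.1, a.2, ha⟩
        obtain ⟨W2, hW2, h2⟩ := htm f ⟨a.1, a.2, ha⟩
        have h3 := (IsLocallyConstant.iff_eventually_eq _).1 (tp f).isLocallyConstant ⟨a.1, a.2, ha⟩
        rw [nhds_subtype, eventually_comap] at h3
        rw [nhds_subtype, eventually_comap]
        filter_upwards [hW1, hW2, h3] with x hx1 hx2 hx3
        rintro b rfl
        simp only [g, dif_pos ha]
        split_ifs with hb
        · exact hx3 ⟨b.1, b.2, hb⟩ rfl
        · rcases lt_or_gt_of_ne hb with hb' | hb'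
          · rw [h2 ⟨b.1, b.2, hb⟩ hx2 hb', hf']
          · rw [h1 ⟨b.1, b.2, hb⟩ hx1 hb']
      · have h3 := (IsLocallyConstant.iff_eventually_eq _).1 f.isLocallyConstant ⟨a.1, a.2, ha⟩
        rw [nhds_subtype, eventually_comap] at h3
        rw [nhds_subtype, eventually_comap]
        filter_upwards [h3, hh.continuousAt.eventually_ne ha] with x hx hx'
        rintro b rfl
        simp only [g, dif_neg ha, dif_neg hx']
        exact hx ⟨b.1, b.2, hx'⟩ rfl
    refine ⟨⟨g, hg⟩, ?_⟩
    ext u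
    rw [hres]
    have : h (incl u).1 ≠ 0 := u.2.2
    change g (incl u) = f u
    simp only [g, dif_neg this]
    rfl
  rw [← LinearMap.rank_range_add_rank_ker J, add_comm]
  gcongr
  · exact (Submodule.rank_mono hker).trans (rank_range_le res)
  · exact Submodule.rank_le _
end jump
section warren
open Topology Filter

def ZI {σ ι : Type*} (θ : ι → MvPolynomial σ ℝ) (y : ι → ℝ) (I : Finset ι) : Set (σ → ℝ) :=
  {x | ∀ i ∈ I, eval x (θ i) = y i}

def UI {σ ι : Type*} (θ : ι → MvPolynomial σ ℝ) (y : ι → ℝ) (J : Finset ι) : Set (σ → ℝ) :=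
  {x | ∀ i ∈ J, eval x (θ i) ≠ y i}

theorem isOpen_UI {σ ι : Type*} (θ : ι → MvPolynomial σ ℝ) (y : ι → ℝ)
    (J : Finset ι) : IsOpen (UI θ y J) := by
  classical
  have : UI θ y J = ⋂ i ∈ J, {x | eval x (θ i) ≠ y i} := by
    ext x; simp [UI]
  rw [this]
  exact isOpen_biInter_finset fun i _ => isOpen_ne_fun (MvPolynomial.continuous_eval _) continuous_const

theorem side_eq {σ ι : Type*} [DecidableEq ι] (θ : ι → MvPolynomial σ ℝ)
    (y : ι → ℝ) (I J : Finset ι) (j : ι) (hjI : j ∉ I) (c : ℝ) (W : Set (σ → ℝ)) (hW : W ⊆ UI θ y J) :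
    W ∩ (fun w (i : ↥(insert j I)) => eval w (θ i)) ⁻¹'
      {v | ∀ i : ↥(insert j I), (i.1 ≠ j → v i = y i) ∧ (i.1 = j → 0 < c * (v i - y i))} =
    W ∩ (ZI θ y I ∩ UI θ y J ∩ {x | 0 < c * (eval x (θ j) - y j)}) := by
  ext x
  constructor
  · rintro ⟨hxW, hx⟩
    refine ⟨hxW, ⟨fun i hi => ?_, hW hxW⟩, ?_⟩
    · exact (hx ⟨i, Finset.mem_insert_of_mem hi⟩).1 (fun h => hjI (h ▸ hi))
    · exact (hx ⟨j, Finset.mem_insert_self _ _⟩).2 rfl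
  · rintro ⟨hxW, ⟨h1, h2⟩, h3⟩
    refine ⟨hxW, ?_⟩
    rintro ⟨i, hi⟩
    refine ⟨fun hij => h1 i ((Finset.mem_insert.1 hi).resolve_left hij), ?_⟩
    intro hij
    have hij' : i = j := hij
    subst hij'
    exact h3

theorem side_loc {σ ι : Type*} [Fintype σ] [DecidableEq ι] (θ : ι → MvPolynomial σ ℝ)
    (y : ι → ℝ) (I J : Finset ι) (j : ι) (hjI : j ∉ I) (p : σ → ℝ)
    (hnd : Nondeg (fun i : ↥(insert j I) => θ i) p) (hpJ : p ∈ UI θ y J) :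
    ∃ W ∈ 𝓝 p, ∀ c : ℝ, IsPreconnected
      (W ∩ (ZI θ y I ∩ UI θ y J ∩ {x | 0 < c * (eval x (θ j) - y j)})) := by
  obtain ⟨W, hW, hWO, hWc⟩ := local_pre (hasStrictFDerivAt_evals (fun i : ↥(insert j I) => θ i) p)
    (LinearMap.range_eq_top.2 hnd.surj) ((isOpen_UI θ y J).mem_nhds hpJ)
  refine ⟨W, hW, fun c => ?_⟩
  rw [← side_eq θ y I J j hjI c W hWO]
  apply hWc
  intro u hu v hv a b ha hb hab i
  refine ⟨fun hi => ?_, fun hi => ?_⟩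
  · have h1 := (hu i).1 hi
    have h2 := (hv i).1 hi
    simp only [Pi.add_apply, Pi.smul_apply, smul_eq_mul, h1, h2]
    rw [← add_mul, hab, one_mul]
  · have h1 := (hu i).2 hi
    have h2 := (hv i).2 hi
    simp only [Pi.add_apply, Pi.smul_apply, smul_eq_mul]
    have : c * (a * u i + b * v i - y i) = a * (c * (u i - y i)) + b * (c * (v i - y i)) := by
      have : y i = (a + b) * y i := by rw [hab, one_mul]
      linear_combination (-c) * this
    rw [this]
    rcases ha.eq_or_lt with rfl | ha'
    · have : b = 1 := by linarith
      subst this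
      simpa using h2
    · have := mul_pos ha' h1
      have := mul_nonneg hb h2.le
      linarith

theorem side_cl {σ ι : Type*} [Fintype σ] [DecidableEq ι] (θ : ι → MvPolynomial σ ℝ)
    (y : ι → ℝ) (I J : Finset ι) (j : ι) (hjI : j ∉ I) (p : σ → ℝ)
    (hnd : Nondeg (fun i : ↥(insert j I) => θ i) p) (hpJ : p ∈ UI θ y J)
    (hpI : p ∈ ZI θ y (insert j I)) (c : ℝ) (hc : c ≠ 0) :
    p ∈ closure (ZI θ y I ∩ UI θ y J ∩ {x | 0 < c * (eval x (θ j) - y j)}) := by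
  have hm := (hasStrictFDerivAt_evals (fun i : ↥(insert j I) => θ i) p).map_nhds_eq_of_surj
    (LinearMap.range_eq_top.2 hnd.surj)
  rw [mem_closure_iff_nhds]
  intro t ht
  have h1 : t ∩ UI θ y J ∈ 𝓝 p := inter_mem ht ((isOpen_UI θ y J).mem_nhds hpJ)
  have h2 := image_mem_map (m := fun w (i : ↥(insert j I)) => eval w (θ i)) h1
  rw [hm] at h2
  let γ : ℝ → (↥(insert j I) → ℝ) := fun ε i => y i + if i.1 = j then ε * c else 0
  have hγ : ContinuousAt γ 0 := by
    refine Continuous.continuousAt ?_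
    refine continuous_pi fun i => ?_
    by_cases hi : i.1 = j
    · simp only [γ, if_pos hi]; fun_prop
    · simp only [γ, if_neg hi]; fun_prop
  have hγ0 : γ 0 = fun (i : ↥(insert j I)) => eval p (θ i) := by
    funext i
    simp only [γ, zero_mul, ite_self, add_zero]
    exact (hpI i.1 i.2).symm
  rw [← hγ0] at h2
  obtain ⟨ε, hε, hε0⟩ : ∃ ε, γ ε ∈ _ ∧ 0 < ε :=
    ((Filter.Eventually.filter_mono nhdsWithin_le_nhds (hγ.preimage_mem_nhds h2) :
      ∀ᶠ ε in 𝓝[>] (0 : ℝ), γ ε ∈ _).and self_mem_nhdsWithin).exists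
  obtain ⟨x, ⟨hxt, hxJ⟩, hx⟩ := hε
  have hx' : ∀ i (hi : i ∈ insert j I), eval x (θ i) = y i + if i = j then ε * c else 0 :=
    fun i hi => congrFun hx ⟨i, hi⟩
  refine ⟨x, hxt, ⟨fun i hi => ?_, hxJ⟩, ?_⟩
  · rw [hx' i (Finset.mem_insert_of_mem hi), if_neg (fun h : i = j => hjI (h ▸ hi)), add_zero]
  · change 0 < c * (eval x (θ j) - y j)
    rw [hx' j (Finset.mem_insert_self _ _), if_pos rfl]
    have : c * (y j + ε * c - y j) = ε * (c * c) := by ring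
    rw [this]
    exact mul_pos hε0 (mul_self_pos.2 hc)

theorem warren {σ ι : Type*} [Fintype σ] [DecidableEq ι] (θ : ι → MvPolynomial σ ℝ)
    (y : ι → ℝ) (hnd : ∀ I : Finset ι, ∀ x ∈ ZI θ y I, Nondeg (fun i : I => θ i) x) (J : Finset ι) :
    ∀ I, Disjoint I J → Module.rank ℝ (LocallyConstant ↥(ZI θ y I ∩ UI θ y J) ℝ) ≤
      ∑ K ∈ J.powerset, Module.rank ℝ (LocallyConstant ↥(ZI θ y (I ∪ K)) ℝ) := by
  induction J using Finset.induction_on with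
  | empty =>
    intro I _
    have : ZI θ y I ∩ UI θ y ∅ = ZI θ y I := by ext x; simp [UI]
    rw [this, Finset.powerset_empty, Finset.sum_singleton, Finset.union_empty]
  | insert j J hj ih =>
    intro I hIJ
    rw [Finset.disjoint_insert_right] at hIJ
    rw [Finset.sum_powerset_insert hj]
    have e1 : ZI θ y I ∩ UI θ y (insert j J) =
        (ZI θ y I ∩ UI θ y J) ∩ {x | eval x (θ j) - y j ≠ 0} := by
      ext x; simp [UI, sub_eq_zero]; tauto
    have e2 : (ZI θ y I ∩ UI θ y J) ∩ {x | eval x (θ j) - y j = 0} =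
        ZI θ y (insert j I) ∩ UI θ y J := by
      ext x; simp [ZI, sub_eq_zero]; tauto
    have hneg : ∀ x, (0 < (-1) * (eval x (θ j) - y j)) ↔ (eval x (θ j) - y j < 0) := by
      intro x; constructor <;> intro h <;> linarith
    have key := rank_jump (ZI θ y I ∩ UI θ y J) (fun x => eval x (θ j) - y j)
      ((MvPolynomial.continuous_eval _).sub continuous_const)
      (by
        intro p hp hp0
        have hpI : p ∈ ZI θ y (insert j I) ∩ UI θ y J := e2 ▸ ⟨hp, hp0⟩
        have h := side_cl θ y I J j hIJ.1 p (hnd _ p hpI.1) hp.2 hpI.1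
        refine ⟨by simpa using h 1 one_ne_zero, ?_⟩
        have h' := h (-1) (by norm_num)
        simp only [hneg] at h'
        exact h')
      (by
        intro p hp hp0
        have hpI : p ∈ ZI θ y (insert j I) ∩ UI θ y J := e2 ▸ ⟨hp, hp0⟩
        obtain ⟨W, hW, h⟩ := side_loc θ y I J j hIJ.1 p (hnd _ p hpI.1) hp.2
        refine ⟨W, hW, by simpa using h 1, ?_⟩
        have h' := h (-1)
        simp only [hneg] at h'
        exact h')
    rw [e1]
    refine key.trans ?_
    refine add_le_add (ih I hIJ.2) ?_
    rw [e2]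
    refine (ih (insert j I) (Finset.disjoint_insert_left.2 ⟨hj, hIJ.2⟩)).trans (le_of_eq ?_)
    refine Finset.sum_congr rfl fun K _ => ?_
    rw [Finset.insert_union, Finset.union_insert]

theorem rank_LC_le {X : Type*} [TopologicalSpace X] [Finite (ConnectedComponents X)] :
    Module.rank ℝ (LocallyConstant X ℝ) ≤ (Nat.card (ConnectedComponents X) : Cardinal) := by
  classical
  have : Fintype (ConnectedComponents X) := Fintype.ofFinite _
  let L : LocallyConstant X ℝ →ₗ[ℝ] (ConnectedComponents X → ℝ) :=
    { toFun := fun f c => f (Quot.out c)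
      map_add' := fun f g => rfl
      map_smul' := fun r f => rfl }
  have hL : Function.Injective L := by
    intro f g hfg
    ext x
    have h1 := congrFun hfg (ConnectedComponents.mk x)
    change f _ = g _ at h1
    have h2 : connectedComponent (Quot.out (ConnectedComponents.mk x)) = connectedComponent x :=
      ConnectedComponents.coe_eq_coe.1 (Quot.out_eq (ConnectedComponents.mk x))
    have h3 : ∀ f : LocallyConstant X ℝ, f (Quot.out (ConnectedComponents.mk x)) = f x := fun f =>
      f.isLocallyConstant.apply_eq_of_isPreconnected isPreconnected_connectedComponent
        (h2 ▸ mem_connectedComponent) mem_connectedComponent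
    rwa [h3, h3] at h1
  have := LinearMap.lift_rank_le_of_injective L hL
  rw [rank_fun'] at this
  simpa [Nat.card_eq_fintype_card] using this

theorem rank_empty {X : Type*} [TopologicalSpace X] [IsEmpty X] :
    Module.rank ℝ (LocallyConstant X ℝ) = 0 := by
  have : Subsingleton (LocallyConstant X ℝ) := ⟨fun f g => by ext x; exact isEmptyElim x⟩
  exact rank_subsingleton' ℝ _
end warren
section assembly
open Topology Filter

theorem exists_levels {σ ι : Type*} [Fintype σ] [Fintype ι] (θ : ι → MvPolynomial σ ℝ)
    (lo hi : ι → ℝ) (h : ∀ i, lo i < hi i) :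
    ∃ y : ι → ℝ, (∀ i, lo i < y i ∧ y i < hi i) ∧ ∀ I : Finset ι,
      (∀ x ∈ ZI θ y I, Nondeg (fun i : I => θ i) x) ∧
      Finite (ConnectedComponents (ZI θ y I)) := by
  classical
  choose q hq0 hq using fun I : Finset ι => alg_sard (fun i : I => θ i)
  choose q' hq0' hq' using fun I : Finset ι => finite_components (fun i : I => θ i)
  let e : ∀ I : Finset ι, I → σ ⊕ ι := fun I i => Sum.inr i.1
  have he : ∀ I, Function.Injective (e I) := fun I a b hab => Subtype.ext (Sum.inr_injective hab)
  let e' : ∀ I : Finset ι, σ ⊕ I → σ ⊕ ι := fun I => Sum.map id Subtype.val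
  have he' : ∀ I, Function.Injective (e' I) := fun I =>
    Sum.map_injective.2 ⟨Function.injective_id, Subtype.val_injective⟩
  let Q : MvPolynomial (σ ⊕ ι) ℝ := ∏ I : Finset ι, (rename (e I) (q I) * rename (e' I) (q' I))
  have hQ : Q ≠ 0 := by
    refine Finset.prod_ne_zero_iff.2 fun I _ => mul_ne_zero ?_ ?_
    · exact fun h0 => hq0 I (rename_injective _ (he I) (by simpa using h0))
    · exact fun h0 => hq0' I (rename_injective _ (he' I) (by simpa using h0))
  obtain ⟨z, hz, hzQ⟩ : ∃ z : σ ⊕ ι → ℝ, (∀ i, z i ∈ Sum.elim (fun _ => Set.univ)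
      (fun i => Set.Ioo (lo i) (hi i)) i) ∧ eval z Q ≠ 0 := by
    by_contra hcon
    push Not at hcon
    refine hQ (MvPolynomial.funext_set (Sum.elim (fun _ => Set.univ)
      (fun i => Set.Ioo (lo i) (hi i))) ?_ ?_)
    · rintro (i | i)
      · exact Set.infinite_univ
      · exact Set.Ioo_infinite (h i)
    · intro z hz
      rw [hcon z (fun i => hz i (Set.mem_univ _)), map_zero]
  refine ⟨fun i => z (Sum.inr i), fun i => hz (Sum.inr i), fun I => ?_⟩
  have hI : eval z (rename (e I) (q I)) ≠ 0 ∧ eval z (rename (e' I) (q' I)) ≠ 0 := by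
    rw [eval_prod] at hzQ
    have := Finset.prod_ne_zero_iff.1 hzQ I (Finset.mem_univ _)
    rw [map_mul] at this
    exact mul_ne_zero_iff.1 this
  rw [eval_rename, eval_rename] at hI
  have hN : ∀ x ∈ ZI θ (fun i => z (Sum.inr i)) I, Nondeg (fun i : I => θ i) x := by
    intro x hx l hl
    by_contra hl0
    apply hI.1
    have := hq I x l hl0 hl
    have hfe : z ∘ e I = fun i : I => eval x (θ i) := by
      funext i
      exact (hx i.1 i.2).symm
    rw [hfe]
    exact this
  refine ⟨hN, ?_⟩
  have h2 := hq' I (fun i => z (Sum.inl i)) (fun i => z (Sum.inr i.1)) (by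
      convert hI.2 using 2
      congr 1
      funext i
      rcases i with i | i <;> rfl) (fun x hx => hN x (fun i hi => hx ⟨i, hi⟩))
  have h3 : {x : σ → ℝ | ∀ i : I, eval x (θ i) = z (Sum.inr i.1)} =
      ZI θ (fun i => z (Sum.inr i)) I := by
    ext x; simp [ZI]
  rwa [h3] at h2

theorem le_rank_LC {X T D : Type*} [TopologicalSpace X] [Fintype T] (pat : X → D)
    (hpat : IsLocallyConstant pat) (w : T → X) (hw : Function.Injective (fun t => pat (w t))) :
    (Fintype.card T : Cardinal) ≤ Module.rank ℝ (LocallyConstant X ℝ) := by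
  let L : LocallyConstant X ℝ →ₗ[ℝ] (T → ℝ) :=
    { toFun := fun f t => f (w t)
      map_add' := fun f g => rfl
      map_smul' := fun r f => rfl }
  have hL : Function.Surjective L := by
    intro u
    refine ⟨⟨fun x => Function.extend (fun t => pat (w t)) u 0 (pat x),
      hpat.comp (Function.extend (fun t => pat (w t)) u 0)⟩, ?_⟩
    funext t
    exact hw.extend_apply u 0 t
  have := L.lift_rank_le_of_surjective hL
  rw [rank_fun'] at this
  simpa using this

theorem pat_lc {σ ι : Type*} [Fintype ι] (θ : ι → MvPolynomial σ ℝ) (y : ι → ℝ) :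
    IsLocallyConstant (fun (x : UI θ y Finset.univ) i => y i < eval x.1 (θ i)) := by
  rw [IsLocallyConstant.iff_eventually_eq]
  intro x
  have : ∀ i, ∀ᶠ x' in 𝓝 x, (y i < eval x'.1 (θ i)) = (y i < eval x.1 (θ i)) := by
    intro i
    have hc : Continuous fun x' : UI θ y Finset.univ => eval x'.1 (θ i) :=
      (MvPolynomial.continuous_eval _).comp continuous_subtype_val
    rcases lt_or_gt_of_ne (x.2 i (Finset.mem_univ _)) with h | h
    · filter_upwards [hc.continuousAt.eventually_lt_const h] with x' hx'
      simp [hx'.not_gt, h.not_gt]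
    · filter_upwards [hc.continuousAt.eventually_const_lt h] with x' hx'
      simp [hx', h]
  filter_upwards [eventually_all.2 this] with x' hx'
  funext i
  exact hx' i

theorem card_good {α : Type*} [Fintype α] [DecidableEq α] (k : ℕ) (G : Finset (Finset (α × Bool)))
    (hG : ∀ I ∈ G, Set.InjOn Prod.fst (I : Set (α × Bool)) ∧ I.card ≤ k) :
    G.card ≤ 2 ^ k * ∑ r ∈ Finset.range (k + 1), (Fintype.card α).choose r := by
  let A : Finset (Finset α) := (Finset.range (k+1)).biUnion fun r => Finset.powersetCard r Finset.univ
  have hA : A.card ≤ ∑ r ∈ Finset.range (k + 1), (Fintype.card α).choose r := by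
    refine Finset.card_biUnion_le.trans (le_of_eq ?_)
    refine Finset.sum_congr rfl fun r _ => ?_
    rw [Finset.card_powersetCard, Finset.card_univ]
  let S : Finset (Σ _ : Finset α, Finset α) := A.sigma fun T => T.powerset
  have hS : S.card ≤ 2 ^ k * A.card := by
    rw [Finset.card_sigma, mul_comm]
    refine Finset.sum_le_card_nsmul _ _ _ fun T hT => ?_
    rw [Finset.card_powerset]
    simp only [A, Finset.mem_biUnion, Finset.mem_range, Finset.mem_powersetCard] at hT
    obtain ⟨r, hr, -, hT⟩ := hT
    exact Nat.pow_le_pow_right (by norm_num) (by omega)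
  refine le_trans ?_ (hS.trans (Nat.mul_le_mul_left _ hA))
  refine Finset.card_le_card_of_injOn
    (fun I => ⟨I.image Prod.fst, (I.image Prod.fst).filter fun a => (a, true) ∈ I⟩) ?_ ?_
  · intro I hI
    obtain ⟨h1, h2⟩ := hG I hI
    simp only [S, A, Finset.coe_sigma, Set.mem_sigma_iff, Finset.mem_coe, Finset.mem_biUnion,
      Finset.mem_range, Finset.mem_powersetCard, Finset.mem_powerset]
    refine ⟨⟨_, ?_, Finset.subset_univ _, rfl⟩, Finset.filter_subset _ _⟩
    exact Nat.lt_succ_of_le (Finset.card_image_le.trans h2)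
  · intro I hI I' hI' hII
    simp only [Sigma.mk.injEq, heq_eq_eq] at hII
    obtain ⟨h1, h2⟩ := hII
    have ht : ∀ a, (a, true) ∈ I ↔ (a, true) ∈ I' := by
      intro a
      have h3 : ∀ I : Finset (α × Bool), (a, true) ∈ I ↔
          a ∈ (I.image Prod.fst).filter fun a => (a, true) ∈ I := by
        intro I
        simp only [Finset.mem_filter, Finset.mem_image]
        exact ⟨fun h => ⟨⟨_, h, rfl⟩, h⟩, fun h => h.2⟩
      rw [h3 I, h3 I', h2]
    have hf : ∀ I ∈ G, ∀ a, (a, false) ∈ I ↔ a ∈ I.image Prod.fst ∧ (a, true) ∉ I := by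
      intro I hI a
      constructor
      · intro h
        refine ⟨Finset.mem_image.2 ⟨_, h, rfl⟩, fun h' => ?_⟩
        have := (hG I hI).1 h h' rfl
        simp at this
      · rintro ⟨h, h'⟩
        obtain ⟨⟨a', b⟩, hab, rfl⟩ := Finset.mem_image.1 h
        cases b
        · exact hab
        · exact absurd hab h'
    ext ⟨a, b⟩
    cases b
    · rw [hf I hI, hf I' hI', h1, ht]
    · exact ht a

theorem rank_bound {α σ : Type*} [Fintype α] [Fintype σ] [DecidableEq α]
    (P : α → MvPolynomial σ ℝ) (y : α × Bool → ℝ) (hy : ∀ a, y (a, false) ≠ y (a, true))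
    (hnd : ∀ I : Finset (α × Bool),
      (∀ x ∈ ZI (fun i => P i.1) y I, Nondeg (fun i : I => P i.1.1) x) ∧
      Finite (ConnectedComponents (ZI (fun i : α × Bool => P i.1) y I))) (B : ℕ)
    (hB : ∀ I : Finset (α × Bool), Set.InjOn Prod.fst (I : Set (α × Bool)) →
      I.card ≤ Fintype.card σ →
      Nat.card (ConnectedComponents (ZI (fun i : α × Bool => P i.1) y I)) ≤ B) :
    Module.rank ℝ (LocallyConstant ↥(UI (fun i : α × Bool => P i.1) y Finset.univ) ℝ) ≤
      ((B * (2 ^ Fintype.card σ * ∑ r ∈ Finset.range (Fintype.card σ + 1),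
        (Fintype.card α).choose r) : ℕ) : Cardinal) := by
  classical
  have h1 := warren (fun i : α × Bool => P i.1) y (fun I => (hnd I).1) Finset.univ ∅
    (Finset.disjoint_empty_left _)
  have e1 : ZI (fun i : α × Bool => P i.1) y ∅ = Set.univ := by ext x; simp [ZI]
  rw [e1, Set.univ_inter] at h1
  refine h1.trans ?_
  set G : Finset (Finset (α × Bool)) := Finset.univ.filter fun I =>
    Set.InjOn Prod.fst (I : Set (α × Bool)) ∧ I.card ≤ Fintype.card σ with hG
  have hbad : ∀ I : Finset (α × Bool), I ∉ G → IsEmpty (ZI (fun i : α × Bool => P i.1) y I) := by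
    intro I hI
    by_contra hne
    rw [not_isEmpty_iff] at hne
    obtain ⟨x, hx⟩ := hne
    apply hI
    simp only [hG, Finset.mem_filter, Finset.mem_univ, true_and]
    constructor
    · rintro ⟨a, b⟩ hab ⟨a', b'⟩ hab' haa
      have haa' : a = a' := haa
      subst haa'
      have h2 : y (a, b) = y (a, b') := (hx (a, b) hab).symm.trans (hx (a, b') hab')
      cases b <;> cases b'
      · rfl
      · exact absurd h2 (hy a)
      · exact absurd h2.symm (hy a)
      · rfl
    · have := ((hnd I).1 x hx).surj
      have h3 := LinearMap.finrank_le_finrank_of_surjective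
        (f := (ContinuousLinearMap.pi fun i : I => pD (P i.1.1) x).toLinearMap) this
      simpa using h3
  have h2 : ∀ I : Finset (α × Bool),
      Module.rank ℝ (LocallyConstant ↥(ZI (fun i : α × Bool => P i.1) y (∅ ∪ I)) ℝ) ≤
      ((if I ∈ G then B else 0 : ℕ) : Cardinal) := by
    intro I
    rw [Finset.empty_union]
    split_ifs with hI
    · have := (hnd I).2
      refine rank_LC_le.trans ?_
      have h3 := (Finset.mem_filter.1 hI).2
      exact_mod_cast hB I h3.1 h3.2
    · have := hbad I hI
      rw [rank_empty]; simp
  refine (Finset.sum_le_sum fun I _ => h2 I).trans ?_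
  rw [← Nat.cast_sum]
  have h4 := card_good (Fintype.card σ) G (fun I hI => (Finset.mem_filter.1 hI).2)
  have h5 : ∑ I ∈ (Finset.univ : Finset (α × Bool)).powerset, (if I ∈ G then B else 0) = B * G.card := by
    rw [Finset.powerset_univ, Finset.sum_ite_mem, Finset.univ_inter, Finset.sum_const, smul_eq_mul, mul_comm]
  rw [h5]
  exact_mod_cast Nat.mul_le_mul_left B h4
end assembly
section numerics

theorem sum_choose_le (m k : ℕ) (hk : 1 ≤ k) (hm : k ≤ m) :
    (∑ r ∈ Finset.range (k + 1), (m.choose r : ℝ)) ≤ (Real.exp 1 * m / k) ^ k := by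
  have hk0 : (0 : ℝ) < k := by exact_mod_cast hk
  have hm0 : (0 : ℝ) < m := by exact_mod_cast (lt_of_lt_of_le hk hm)
  set x : ℝ := k / m with hx
  have hx0 : 0 < x := div_pos hk0 hm0
  have hx1 : x ≤ 1 := (div_le_one hm0).2 (by exact_mod_cast hm)
  have h1 : x ^ k * ∑ r ∈ Finset.range (k + 1), (m.choose r : ℝ) ≤ (1 + x) ^ m := by
    rw [Finset.mul_sum, add_comm 1 x, add_pow]
    have h2 : ∑ r ∈ Finset.range (k + 1), x ^ k * (m.choose r : ℝ) ≤
        ∑ r ∈ Finset.range (k + 1), x ^ r * 1 ^ (m - r) * (m.choose r : ℝ) := by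
      refine Finset.sum_le_sum fun r hr => ?_
      rw [one_pow, mul_one]
      refine mul_le_mul_of_nonneg_right ?_ (Nat.cast_nonneg _)
      exact pow_le_pow_of_le_one hx0.le hx1 (by have := Finset.mem_range.1 hr; omega)
    refine h2.trans ?_
    refine Finset.sum_le_sum_of_subset_of_nonneg ?_ (fun i _ _ => by positivity)
    intro r hr
    have := Finset.mem_range.1 hr
    exact Finset.mem_range.2 (by omega)
  have h3 : (1 + x) ^ m ≤ Real.exp 1 ^ k := by
    have h4 : 1 + x ≤ Real.exp x := by linarith [Real.add_one_le_exp x]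
    calc (1 + x) ^ m ≤ Real.exp x ^ m := pow_le_pow_left₀ (by linarith) h4 m
      _ = Real.exp 1 ^ k := by
        rw [← Real.exp_nat_mul, ← Real.exp_nat_mul]
        congr 1
        rw [hx]; field_simp
  have h5 : (Real.exp 1 * m / k) ^ k = Real.exp 1 ^ k / x ^ k := by
    rw [← div_pow]
    congr 1
    rw [hx]; field_simp
  rw [h5, le_div_iff₀ (by positivity), mul_comm]
  exact h1.trans h3

theorem lg_two_e_s (s : ℕ) (hs : 1 ≤ s) : 2 ≤ Real.logb 2 (2 * Real.exp 1 * s) := by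
  have hs1 : (1 : ℝ) ≤ s := by exact_mod_cast hs
  have he : (2 : ℝ) ≤ Real.exp 1 := by linarith [Real.add_one_le_exp (1 : ℝ)]
  rw [Real.le_logb_iff_rpow_le (by norm_num) (by positivity)]
  have : (2 : ℝ) ^ (2 : ℝ) = 4 := by
    rw [show (2 : ℝ) = ((2 : ℕ) : ℝ) by norm_num, Real.rpow_natCast]; norm_num
  rw [this]
  nlinarith [mul_le_mul he hs1 zero_le_one (by positivity)]

theorem num (s k v B : ℕ) (hs : 1 ≤ s) (hk : 1 ≤ k) (hv : 4 * k ≤ v) (hB : 1 ≤ B)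
    (h : 2 ^ v ≤ B * (2 ^ k * ∑ r ∈ Finset.range (k + 1), (s * v).choose r)) :
    (v : ℝ) ≤ 2 * Real.logb 2 B + 2 * k * Real.logb 2 (2 * Real.exp 1 * s) := by
  have hk0 : (0 : ℝ) < k := by exact_mod_cast hk
  have hs0 : (0 : ℝ) < s := by exact_mod_cast hs
  have hv0 : (0 : ℝ) < v := by
    have : 0 < v := by omega
    exact_mod_cast this
  have hB0 : (0 : ℝ) < B := by exact_mod_cast hB
  have hv4 : 4 * (k : ℝ) ≤ v := by exact_mod_cast hv
  have h1 : (2 : ℝ) ^ v ≤ B * (2 ^ k * ∑ r ∈ Finset.range (k + 1), ((s * v).choose r : ℝ)) := by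
    exact_mod_cast h
  have h2 := sum_choose_le (s * v) k hk (by nlinarith)
  have h3 : (2 : ℝ) ^ v ≤ B * ((2 * Real.exp 1 * s) * (v / k)) ^ k := by
    refine h1.trans ?_
    refine mul_le_mul_of_nonneg_left ?_ hB0.le
    refine (mul_le_mul_of_nonneg_left h2 (by positivity)).trans (le_of_eq ?_)
    rw [← mul_pow]
    congr 1
    push_cast
    ring
  have h4 := Real.logb_le_logb_of_le (b := 2) (by norm_num) (by positivity) h3
  rw [Real.logb_mul hB0.ne' (by positivity), Real.logb_pow, Real.logb_pow,
    Real.logb_mul (by positivity) (by positivity), Real.logb_self_eq_one (by norm_num)] at h4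
  have h5 : Real.logb 2 (v / k) ≤ v / k / 2 := by
    set t : ℝ := v / k with ht
    have ht4 : 4 ≤ t := by rw [ht, le_div_iff₀ hk0]; exact hv4
    rw [Real.logb, div_le_iff₀ (Real.log_pos (by norm_num))]
    have h6 : Real.log t = 2 * Real.log 2 + Real.log (t / 4) := by
      rw [Real.log_div (show t ≠ 0 by linarith) (show (4 : ℝ) ≠ 0 by norm_num), show (4 : ℝ) = 2 ^ 2 by norm_num, Real.log_pow]
      push_cast; ring
    have h7 := Real.log_le_sub_one_of_pos (show 0 < t / 4 by positivity)
    have h8 := Real.log_two_gt_d9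
    nlinarith
  have h6 : (k : ℝ) * (v / k / 2) = v / 2 := by field_simp
  have h7 := mul_le_mul_of_nonneg_left h5 hk0.le
  rw [h6] at h7
  nlinarith
end numerics
section counting
open Topology Filter

theorem exists_delta {β : Type*} [Finite β] (f : β → ℝ) : ∃ δ > 0, ∀ b, f b ≠ 0 → δ < |f b| := by
  have h : ∀ b, ∀ᶠ δ in 𝓝[>] (0 : ℝ), f b ≠ 0 → δ < |f b| := by
    intro b
    by_cases hb : f b = 0
    · exact Eventually.of_forall fun δ h => absurd hb h
    · filter_upwards [nhdsWithin_le_nhds (eventually_lt_nhds (abs_pos.2 hb))] with δ hδ _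
      exact hδ
  obtain ⟨δ, h1, h2⟩ := ((eventually_all.2 h).and self_mem_nhdsWithin).exists
  exact ⟨δ, h2, h1⟩

theorem Nondeg.reindex {σ I I' : Type*} [Fintype σ] [Fintype I] [Fintype I']
    {P : I → MvPolynomial σ ℝ} {x : σ → ℝ} (h : Nondeg P x) (e : I' ≃ I) :
    Nondeg (fun n => P (e n)) x := by
  intro l hl
  have h1 := h (fun i => l (e.symm i)) (fun j => by
    rw [← hl j, ← Equiv.sum_comp e]
    simp)
  funext n
  simpa using congrFun h1 (e n)

theorem exists_subst (k N : ℕ) (p : MvPolynomial (Fin k ⊕ Fin N) ℝ) (x : Fin N → ℝ) :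
    ∃ q : MvPolynomial (Fin k) ℝ, ∀ w, eval w q = eval (Sum.elim w x) p := by
  refine ⟨bind₁ (Sum.elim X (fun n => C (x n))) p, fun w => ?_⟩
  induction p using MvPolynomial.induction_on with
  | C a => simp
  | add p q hp hq => simp [hp, hq]
  | mul_X p i hp =>
    rw [map_mul, map_mul, hp, map_mul]
    rcases i with i | i <;> simp

theorem count_bound
    (s k N : ℕ)
    (τ : Fin s → MvPolynomial (Fin k ⊕ Fin N) ℝ)
    (sign : Fin s → Bool)
    (g : (Fin s → Prop) → Prop)
    (φ : (Fin k → ℝ) → (Fin N → ℝ) → Prop)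
    (hφ : ∀ w x, φ w x ↔ g (fun j =>
      if sign j then MvPolynomial.eval (Sum.elim w x) (τ j) = 0
      else 0 < MvPolynomial.eval (Sum.elim w x) (τ j)))
    (B : ℕ)
    (S : Finset (Fin N → ℝ))
    (hcomp : ∀ x : Fin S.card → (Fin N → ℝ), ∀ r : ℕ, r ≤ k →
      ∀ ι : Fin r → Fin s × Fin S.card, Function.Injective ι →
      ∀ f : (Fin k → ℝ) → (Fin r → ℝ),
        (∀ w j, f w j = MvPolynomial.eval (Sum.elim w (x (ι j).2)) (τ (ι j).1)) →
      ∀ y : Fin r → ℝ, (∀ z ∈ f ⁻¹' {y}, Function.Surjective (fderiv ℝ f z)) →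
        Nat.card (ConnectedComponents ↥(f ⁻¹' {y})) ≤ B)
    (hS : ∀ T ⊆ S, ∃ w : Fin k → ℝ, (↑S : Set (Fin N → ℝ)) ∩ {x | φ w x} = ↑T) :
    2 ^ S.card ≤ B * (2 ^ k * ∑ r ∈ Finset.range (k + 1), (s * S.card).choose r) := by
  classical
  let x : Fin S.card → (Fin N → ℝ) := fun i => (S.equivFin.symm i).1
  choose P hP using fun a : Fin s × Fin S.card => exists_subst k N (τ a.1) (x a.2)
  choose w hw using fun T : ↥S.powerset => hS T.1 (Finset.mem_powerset.1 T.2)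
  obtain ⟨δ, hδ0, hδ⟩ := exists_delta
    (fun b : ↥S.powerset × (Fin s × Fin S.card) => eval (w b.1) (P b.2))
  obtain ⟨y, hy, hlev⟩ := exists_levels (fun i : (Fin s × Fin S.card) × Bool => P i.1)
    (fun i => if i.2 then 0 else -δ) (fun i => if i.2 then δ else 0) (by
      rintro ⟨a, b⟩
      cases b <;> simp [hδ0])
  have hyt : ∀ a, 0 < y (a, true) ∧ y (a, true) < δ := fun a => by simpa using hy (a, true)
  have hyf : ∀ a, -δ < y (a, false) ∧ y (a, false) < 0 := fun a => by simpa using hy (a, false)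
  have hT0 : ∀ T a, eval (w T) (P a) = 0 ∨ δ < eval (w T) (P a) ∨ eval (w T) (P a) < -δ := by
    intro T a
    by_cases h0 : eval (w T) (P a) = 0
    · exact Or.inl h0
    · right
      rcases lt_abs.1 (hδ (T, a) h0) with h | h
      · exact Or.inl h
      · exact Or.inr (by simp only at h; linarith)
  have hwU : ∀ T, w T ∈ UI (fun i : (Fin s × Fin S.card) × Bool => P i.1) y Finset.univ := by
    rintro T ⟨a, b⟩ -
    have h1 := hyt a
    have h2 := hyf a
    change eval (w T) (P a) ≠ _
    rcases hT0 T a with h | h | h <;> cases b <;> intro h' <;> linarith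
  have hpos : ∀ T a, 0 < eval (w T) (P a) ↔ y (a, true) < eval (w T) (P a) := by
    intro T a
    have h1 := hyt a
    rcases hT0 T a with h | h | h <;> constructor <;> intro h' <;> linarith
  have hnn : ∀ T a, 0 ≤ eval (w T) (P a) ↔ y (a, false) < eval (w T) (P a) := by
    intro T a
    have h1 := hyf a
    rcases hT0 T a with h | h | h <;> constructor <;> intro h' <;> linarith
  have hinj : Function.Injective (fun T : ↥S.powerset =>
      (fun (x : UI (fun i : (Fin s × Fin S.card) × Bool => P i.1) y Finset.univ)
        (i : (Fin s × Fin S.card) × Bool) => y i < eval x.1 (P i.1)) ⟨w T, hwU T⟩) := by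
    intro T T' hTT
    have hp : ∀ i : (Fin s × Fin S.card) × Bool,
        (y i < eval (w T) (P i.1)) = (y i < eval (w T') (P i.1)) := fun i => congrFun hTT i
    have hpos' : ∀ a, 0 < eval (w T) (P a) ↔ 0 < eval (w T') (P a) := by
      intro a
      rw [hpos, hpos]
      exact iff_of_eq (hp (a, true))
    have hnn' : ∀ a, 0 ≤ eval (w T) (P a) ↔ 0 ≤ eval (w T') (P a) := by
      intro a
      rw [hnn, hnn]
      exact iff_of_eq (hp (a, false))
    have hz' : ∀ a, eval (w T) (P a) = 0 ↔ eval (w T') (P a) = 0 := by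
      intro a
      have e : ∀ u : ℝ, u = 0 ↔ 0 ≤ u ∧ ¬ 0 < u := fun u =>
        ⟨fun h => by simp [h], fun h => le_antisymm (not_lt.1 h.2) h.1⟩
      rw [e, e, hpos', hnn']
    have hφφ : ∀ p ∈ S, φ (w T) p ↔ φ (w T') p := by
      intro p hpS
      obtain ⟨i, rfl⟩ : ∃ i, x i = p := ⟨S.equivFin ⟨p, hpS⟩, by simp [x]⟩
      rw [hφ, hφ]
      have : (fun j => if sign j then eval (Sum.elim (w T) (x i)) (τ j) = 0
          else 0 < eval (Sum.elim (w T) (x i)) (τ j)) =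
        (fun j => if sign j then eval (Sum.elim (w T') (x i)) (τ j) = 0
          else 0 < eval (Sum.elim (w T') (x i)) (τ j)) := by
        funext j
        have h1 := hz' (j, i)
        have h2 := hpos' (j, i)
        rw [hP, hP] at h1 h2
        simp only [h1, h2]
      rw [this]
    apply Subtype.ext
    apply Finset.coe_injective
    rw [← hw T, ← hw T']
    ext p
    constructor
    · rintro ⟨h1, h2⟩
      exact ⟨h1, (hφφ p h1).1 h2⟩
    · rintro ⟨h1, h2⟩
      exact ⟨h1, (hφφ p h1).2 h2⟩
  have hlow := le_rank_LC _ (pat_lc (fun i : (Fin s × Fin S.card) × Bool => P i.1) y)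
    (fun T => ⟨w T, hwU T⟩) hinj
  have hup := rank_bound P y (fun a => by
      have h1 := hyt a
      have h2 := hyf a
      exact (h2.2.trans h1.1).ne) hlev B (by
    intro I hI hIk
    rw [Fintype.card_fin] at hIk
    let e := I.equivFin
    let ι : Fin I.card → Fin s × Fin S.card := fun n => (e.symm n).1.1
    let f : (Fin k → ℝ) → (Fin I.card → ℝ) := fun u n => eval u (P (ι n))
    have hpre : f ⁻¹' {fun n => y (e.symm n).1} =
        ZI (fun i : (Fin s × Fin S.card) × Bool => P i.1) y I := by
      ext u
      simp only [Set.mem_preimage, Set.mem_singleton_iff, _root_.funext_iff]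
      constructor
      · intro h i hi
        have := h (e ⟨i, hi⟩)
        simpa [f, ι] using this
      · intro h n
        exact h _ (e.symm n).2
    have := hcomp x I.card hIk ι (fun n n' hnn => by
        have h1 : (e.symm n).1 = (e.symm n').1 := hI (e.symm n).2 (e.symm n').2 hnn
        exact e.symm.injective (Subtype.ext h1)) f (fun u n => hP _ _)
      (fun n => y (e.symm n).1) (fun z hz => by
        rw [hpre] at hz
        have h1 := ((hlev I).1 z hz).reindex e.symm
        have h2 := (hasStrictFDerivAt_evals (fun n => P (ι n)) z).hasFDerivAt.fderiv
        change Function.Surjective (fderiv ℝ (fun u n => eval u (P (ι n))) z)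
        rw [h2]
        exact h1.surj)
    rwa [hpre] at this)
  have := hlow.trans hup
  rw [Fintype.card_coe, Finset.card_powerset] at this
  have := Nat.cast_le.1 this
  simpa using this

theorem trivial_case {N k : ℕ} (φ : (Fin k → ℝ) → (Fin N → ℝ) → Prop)
    (h : ∀ w w' x, φ w x → φ w' x) (S : Finset (Fin N → ℝ))
    (hS : ∀ T ⊆ S, ∃ w : Fin k → ℝ, (↑S : Set (Fin N → ℝ)) ∩ {x | φ w x} = ↑T) : S.card = 0 := by
  obtain ⟨w0, h0⟩ := hS ∅ (Finset.empty_subset _)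
  obtain ⟨w1, h1⟩ := hS S (Finset.Subset.refl _)
  rw [Finset.card_eq_zero, Finset.eq_empty_iff_forall_notMem]
  intro p hp
  have h2 : p ∈ (↑S : Set (Fin N → ℝ)) ∩ {x | φ w1 x} := by rw [h1]; exact hp
  have h3 : p ∈ (↑S : Set (Fin N → ℝ)) ∩ {x | φ w0 x} := ⟨h2.1, h _ _ _ h2.2⟩
  rw [h0] at h3
  simp at h3
end counting

/-- Karpinski–Macintyre-style VC bound: `φ(w,x)` is a fixed Boolean
combination (encoded by `g : (Fin s → Prop) → Prop` and the choice `sign` of atom type)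
of `s` atomic predicates `τ_j(w,x) = 0` or `τ_j(w,x) > 0`.  If `B ≥ 1` bounds the number
of connected components of `f⁻¹(y)` for every map `f = (θ₁,…,θ_r)` built from `r ≤ k` of
the `s·v` polynomials `τ_j(·,xᵢ)` (for any `v ≥ 1` with `s·v ≥ k`, any points
`x₁,…,x_v ∈ ℝ^N`) and every regular value `y`, then every finite subset of `ℝ^N`
shattered by `𝓐 = {A_w}` has cardinality at most `2·lg B + 2k·lg(2es)`. -/
theorem vc_bound_from_component_bound
    (s k N : ℕ)
    (τ : Fin s → MvPolynomial (Fin k ⊕ Fin N) ℝ)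
    (sign : Fin s → Bool)
    (g : (Fin s → Prop) → Prop)
    (φ : (Fin k → ℝ) → (Fin N → ℝ) → Prop)
    (hφ : ∀ w x, φ w x ↔ g (fun j =>
      if sign j then MvPolynomial.eval (Sum.elim w x) (τ j) = 0
      else 0 < MvPolynomial.eval (Sum.elim w x) (τ j)))
    (B : ℕ) (hB : 1 ≤ B)
    (hcomp : ∀ v : ℕ, 1 ≤ v → k ≤ s * v →
      ∀ x : Fin v → (Fin N → ℝ), ∀ r : ℕ, r ≤ k →
      ∀ ι : Fin r → Fin s × Fin v, Function.Injective ι →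
      ∀ f : (Fin k → ℝ) → (Fin r → ℝ),
        (∀ w j, f w j = MvPolynomial.eval (Sum.elim w (x (ι j).2)) (τ (ι j).1)) →
      ∀ y : Fin r → ℝ, (∀ z ∈ f ⁻¹' {y}, Function.Surjective (fderiv ℝ f z)) →
        Nat.card (ConnectedComponents ↥(f ⁻¹' {y})) ≤ B) :
    ∀ S : Finset (Fin N → ℝ),
      (∀ T ⊆ S, ∃ w : Fin k → ℝ, (↑S : Set (Fin N → ℝ)) ∩ {x | φ w x} = ↑T) →
      (S.card : ℝ) ≤ 2 * Real.logb 2 B + 2 * k * Real.logb 2 (2 * Real.exp 1 * s) := by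
  intro S hS
  have hlB : 0 ≤ Real.logb 2 B := Real.logb_nonneg (by norm_num) (by exact_mod_cast hB)
  by_cases hs : s = 0
  · subst hs
    have h0 := trivial_case φ (fun w w' x h => by
      rw [hφ] at h ⊢
      convert h using 2) S hS
    rw [h0]
    simp only [Nat.cast_zero, mul_zero, Real.logb_zero, add_zero]
    positivity
  have hs1 : 1 ≤ s := Nat.one_le_iff_ne_zero.2 hs
  have hlg := lg_two_e_s s hs1
  by_cases hk : k = 0
  · subst hk
    have h0 := trivial_case φ (fun w w' x h => by rwa [Subsingleton.elim w' w]) S hS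
    rw [h0]
    simp only [Nat.cast_zero, mul_zero, zero_mul, add_zero]
    positivity
  have hk1 : 1 ≤ k := Nat.one_le_iff_ne_zero.2 hk
  have hk0 : (0 : ℝ) < k := by exact_mod_cast hk1
  by_cases hv : S.card < 4 * k
  · have hv' : (S.card : ℝ) ≤ 4 * k := by exact_mod_cast hv.le
    nlinarith
  push Not at hv
  have hv1 : 1 ≤ S.card := by omega
  have hksv : k ≤ s * S.card := by nlinarith
  exact num s k S.card B hs1 hk1 hv hB
    (count_bound s k N τ sign g φ hφ B S (hcomp S.card hv1 hksv) hS)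
end

section
/- Let τ_1, …, τ_s be real polynomials in (w, x) ∈ ℝ^k × ℝ^N, each of degree at most d in the components of w, and let φ(w, x) be a fixed Boolean combination of the s atomic predicates τ_j(w, x) = 0 or τ_j(w, x) > 0. For each w ∈ ℝ^k let A_w = {x ∈ ℝ^N : φ(w, x) holds}, and let 𝓐 = {A_w : w ∈ ℝ^k}. Then every finite subset of ℝ^N shattered by 𝓐 has cardinality at most 2k·lg(4eds). -/
namespace GJ
open Finset

/-- Exponent vectors of total degree at most `A`. -/
noncomputable def Exps (κ : Type) [Fintype κ] (A : ℕ) : Finset (κ → ℕ) :=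
  by classical exact (Fintype.piFinset fun _ => Finset.range (A + 1)).filter (fun μ => ∑ i, μ i ≤ A)

lemma mem_Exps {κ : Type} [Fintype κ] {A : ℕ} {μ : κ → ℕ} : μ ∈ Exps κ A ↔ ∑ i, μ i ≤ A := by
  classical
  unfold Exps
  rw [Finset.mem_filter]
  constructor
  · exact fun h => h.2
  · intro h
    refine ⟨?_, h⟩
    rw [Fintype.mem_piFinset]
    intro i
    have : μ i ≤ ∑ i, μ i := Finset.single_le_sum (f := μ) (fun _ _ => Nat.zero_le _) (Finset.mem_univ i)
    rw [Finset.mem_range]; omega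

lemma card_Exps (κ : Type) [Fintype κ] (A : ℕ) :
    (Exps κ A).card = (A + Fintype.card κ).choose (Fintype.card κ) := by
  classical
  have e : (Exps κ A) ≃ {P : Option κ → ℕ // ∑ i, P i = A} :=
    { toFun := fun μ => ⟨fun o => o.elim (A - ∑ i, μ.1 i) μ.1, by
        have := mem_Exps.1 μ.2
        rw [Fintype.sum_option]; simp; omega⟩
      invFun := fun P => ⟨fun i => P.1 (some i), by
        have := P.2
        rw [Fintype.sum_option] at this
        rw [mem_Exps]; omega⟩
      left_inv := fun μ => by ext; simp
      right_inv := fun P => by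
        have := P.2
        rw [Fintype.sum_option] at this
        ext o
        cases o with
        | none => simp; omega
        | some i => simp }
  have h := Fintype.card_congr (e.trans (Sym.equivNatSumOfFintype (Option κ) A).symm)
  rw [Fintype.card_coe, Sym.card_sym_eq_choose, Fintype.card_option] at h
  rw [h]
  rw [show Fintype.card κ + 1 + A - 1 = A + Fintype.card κ by omega]
  rw [← Nat.choose_symm_of_eq_add (show A + Fintype.card κ = Fintype.card κ + A by omega)]

variable {κ ι : Type} [Fintype κ] [Fintype ι]

/-- bi-monomials -/
def mono (μ : κ → ℕ) (ν : ι → ℕ) : (κ → ℝ) × (ι → ℝ) → ℝ :=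
  fun x => (∏ i, x.1 i ^ μ i) * ∏ i, x.2 i ^ ν i

lemma mono_mul (μ μ' : κ → ℕ) (ν ν' : ι → ℕ) :
    mono μ ν * mono μ' ν' = mono (μ + μ') (ν + ν') := by
  ext x
  simp only [mono, Pi.mul_apply, Pi.add_apply, pow_add, Finset.prod_mul_distrib]
  ring

/-- polynomial functions of bidegree at most `(A, B)` -/
def V (κ ι : Type) [Fintype κ] [Fintype ι] (A B : ℕ) :
    Submodule ℝ ((κ → ℝ) × (ι → ℝ) → ℝ) :=
  Submodule.span ℝ ((fun p : (κ → ℕ) × (ι → ℕ) => mono p.1 p.2) '' ↑(Exps κ A ×ˢ Exps ι B))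

lemma mono_mem {μ : κ → ℕ} {ν : ι → ℕ} {A B : ℕ} (h1 : ∑ i, μ i ≤ A) (h2 : ∑ i, ν i ≤ B) :
    mono μ ν ∈ V κ ι A B := by
  apply Submodule.subset_span
  refine ⟨(μ, ν), ?_, rfl⟩
  rw [Finset.mem_coe, Finset.mem_product]
  exact ⟨mem_Exps.2 h1, mem_Exps.2 h2⟩

lemma V_mono {A B A' B' : ℕ} (h1 : A ≤ A') (h2 : B ≤ B') : V κ ι A B ≤ V κ ι A' B' := by
  apply Submodule.span_mono
  apply Set.image_mono
  intro p hp
  rw [Finset.mem_coe, Finset.mem_product, mem_Exps, mem_Exps] at *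
  exact ⟨hp.1.trans h1, hp.2.trans h2⟩

lemma V_mul {A B A' B' : ℕ} {f g : (κ → ℝ) × (ι → ℝ) → ℝ} (hf : f ∈ V κ ι A B)
    (hg : g ∈ V κ ι A' B') : f * g ∈ V κ ι (A + A') (B + B') := by
  have h := Submodule.mul_mem_mul hf hg
  unfold V at h
  rw [Submodule.span_mul_span] at h
  refine (Submodule.span_le.2 ?_) h
  rintro _ ⟨_, ⟨p, hp, rfl⟩, _, ⟨q, hq, rfl⟩, rfl⟩
  rw [Finset.mem_coe, Finset.mem_product, mem_Exps, mem_Exps] at *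
  simp only [mono_mul]
  apply mono_mem
  · simp only [Pi.add_apply, Finset.sum_add_distrib]; omega
  · simp only [Pi.add_apply, Finset.sum_add_distrib]; omega

lemma V_const (c : ℝ) (A B : ℕ) : (fun _ => c) ∈ V κ ι A B := by
  have : (fun _ => c) = c • mono (0 : κ → ℕ) (0 : ι → ℕ) := by
    ext x; simp [mono]
  rw [this]
  exact Submodule.smul_mem _ _ (mono_mem (by simp) (by simp))

lemma V_one (A B : ℕ) : (1 : (κ → ℝ) × (ι → ℝ) → ℝ) ∈ V κ ι A B := V_const 1 A B

lemma V_pow {A B : ℕ} {f : (κ → ℝ) × (ι → ℝ) → ℝ} (hf : f ∈ V κ ι A B) (n : ℕ) :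
    f ^ n ∈ V κ ι (n * A) (n * B) := by
  induction n with
  | zero => simpa using V_one 0 0
  | succ n ih =>
    rw [pow_succ, Nat.succ_mul, Nat.succ_mul]
    exact V_mul ih hf

lemma V_prod {α : Type} (s : Finset α) {A B : α → ℕ} {f : α → (κ → ℝ) × (ι → ℝ) → ℝ}
    (hf : ∀ a ∈ s, f a ∈ V κ ι (A a) (B a)) :
    (∏ a ∈ s, f a) ∈ V κ ι (∑ a ∈ s, A a) (∑ a ∈ s, B a) := by
  classical
  induction s using Finset.induction_on with
  | empty => simpa using V_one 0 0
  | insert a s ha ih =>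
    rw [Finset.prod_insert ha, Finset.sum_insert ha, Finset.sum_insert ha]
    exact V_mul (hf a (by simp)) (ih fun b hb => hf b (by simp [hb]))

lemma V_fst (j : κ) {A : ℕ} (hA : 1 ≤ A) (B : ℕ) : (fun x => x.1 j) ∈ V κ ι A B := by
  classical
  have : (fun x : (κ → ℝ) × (ι → ℝ) => x.1 j) = mono (Pi.single j 1) 0 := by
    ext x; simp [mono, Pi.single_apply]
  rw [this]
  exact mono_mem (by simpa using hA) (by simp)

lemma V_snd (j : ι) (A : ℕ) {B : ℕ} (hB : 1 ≤ B) : (fun x => x.2 j) ∈ V κ ι A B := by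
  classical
  have : (fun x : (κ → ℝ) × (ι → ℝ) => x.2 j) = mono 0 (Pi.single j 1) := by
    ext x; simp [mono, Pi.single_apply]
  rw [this]
  exact mono_mem (by simp) (by simpa using hB)

lemma V_cont {A B : ℕ} {f : (κ → ℝ) × (ι → ℝ) → ℝ} (hf : f ∈ V κ ι A B) :
    Continuous f := by
  induction hf using Submodule.span_induction with
  | mem x h =>
    obtain ⟨p, -, rfl⟩ := h
    unfold mono
    fun_prop
  | zero => exact continuous_const
  | add x y _ _ hx hy => exact hx.add hy
  | smul a x _ hx => exact hx.const_smul a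

lemma V_card {A B : ℕ} {α : Type} [Fintype α] (f : α → (κ → ℝ) × (ι → ℝ) → ℝ)
    (hf : ∀ a, f a ∈ V κ ι A B) (hl : LinearIndependent ℝ f) :
    Fintype.card α ≤ (A + Fintype.card κ).choose (Fintype.card κ) *
      (B + Fintype.card ι).choose (Fintype.card ι) := by
  classical
  have hsub : Set.range f ⊆ V κ ι A B := by
    rintro _ ⟨a, rfl⟩; exact hf a
  have h2 := linearIndependent_le_span_aux' f hl
    (↑((Exps κ A ×ˢ Exps ι B).image (fun p : (κ → ℕ) × (ι → ℕ) => mono p.1 p.2)) : Set _) (by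
      rw [Finset.coe_image]; exact hsub)
  simp only [Finset.coe_sort_coe, Fintype.card_coe] at h2
  refine h2.trans (Finset.card_image_le.trans ?_)
  rw [Finset.card_product, card_Exps, card_Exps]

end GJ
namespace GJ
open Finset Filter Topology

lemma indep {E β : Type} [NormedAddCommGroup E] [NormedSpace ℝ E] [Fintype β]
    (F : β → E → ℝ) (Z : Finset E) (e : E → E → ℝ) (he : ∀ z ∈ Z, Continuous (e z))
    (he1 : ∀ z ∈ Z, e z z = 1) (he0 : ∀ z ∈ Z, ∀ z' ∈ Z, z' ≠ z → e z' z = 0)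
    (hF0 : ∀ z ∈ Z, ∀ j, F j z = 0)
    (hL : ∀ z ∈ Z, ∃ L : E →L[ℝ] (β → ℝ),
      HasFDerivAt (fun x j => F j x) L z ∧ Function.Surjective L) :
    LinearIndependent ℝ (fun (p : Z × (β → ℕ)) (x : E) => e p.1 x * ∏ j, F j x ^ p.2 j) := by
  classical
  rw [linearIndependent_iff']
  intro s g hs
  by_contra! hcon
  obtain ⟨p1, hp1, hgp1⟩ := hcon
  set s' := s.filter (fun p => g p ≠ 0) with hs'
  have hne : s'.Nonempty := ⟨p1, by simp [hs', hp1, hgp1]⟩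
  obtain ⟨p0, hp0, hmin⟩ := Finset.exists_min_image s' (fun p => ∑ j, p.2 j) hne
  set a := ∑ j, p0.2 j with ha
  obtain ⟨L, hd, hsurj⟩ := hL p0.1 p0.1.2
  set z : E := p0.1.1 with hz
  have hzZ : z ∈ Z := p0.1.2
  have hsum : ∀ x, ∑ p ∈ s', g p * (e p.1 x * ∏ j, F j x ^ p.2 j) = 0 := by
    intro x
    have := congrFun hs x
    simp only [Finset.sum_apply, Pi.smul_apply, smul_eq_mul, Pi.zero_apply] at this
    rw [hs', Finset.sum_filter_of_ne]
    · exact this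
    · intro p _ h0 h1; apply h0; rw [h1, zero_mul]
  have hslope : ∀ v j, Tendsto (fun t : ℝ => t⁻¹ * F j (z + t • v)) (𝓝[≠] 0) (𝓝 (L v j)) := by
    intro v j
    have h1 : HasFDerivAt (F j) ((ContinuousLinearMap.proj j : (β → ℝ) →L[ℝ] ℝ).comp L) z :=
      (hasFDerivAt_pi'.1 hd) j
    have h2 := (h1.hasLineDerivAt v)
    unfold HasLineDerivAt at h2
    rw [hasDerivAt_iff_tendsto_slope_zero] at h2
    simpa [hF0 z hzZ j] using h2
  have hev : ∀ v, ∑ p ∈ s', g p * (e p.1 z * (∏ j, (L v j) ^ p.2 j) * 0 ^ ((∑ j, p.2 j) - a)) = 0 := by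
    intro v
    have hlim : Tendsto (fun t : ℝ => ∑ p ∈ s', g p * (e p.1 (z + t • v) *
        (∏ j, (t⁻¹ * F j (z + t • v)) ^ p.2 j) * t ^ ((∑ j, p.2 j) - a))) (𝓝[≠] 0)
        (𝓝 (∑ p ∈ s', g p * (e p.1 z * (∏ j, (L v j) ^ p.2 j) * 0 ^ ((∑ j, p.2 j) - a)))) := by
      apply tendsto_finsetSum
      intro p _
      apply Tendsto.const_mul
      apply Tendsto.mul
      · apply Tendsto.mul
        · have : Continuous (fun t : ℝ => e p.1 (z + t • v)) :=
            (he p.1 p.1.2).comp (by fun_prop)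
          have := (this.tendsto 0).mono_left (nhdsWithin_le_nhds (s := {0}ᶜ))
          simpa using this
        · apply tendsto_finsetProd
          intro j _
          exact (hslope v j).pow _
      · have : Continuous (fun t : ℝ => t ^ ((∑ j, p.2 j) - a)) := by fun_prop
        exact (this.tendsto 0).mono_left nhdsWithin_le_nhds
    have hzero : (fun t : ℝ => ∑ p ∈ s', g p * (e p.1 (z + t • v) *
        (∏ j, (t⁻¹ * F j (z + t • v)) ^ p.2 j) * t ^ ((∑ j, p.2 j) - a))) =ᶠ[𝓝[≠] 0] fun _ => 0 := by
      filter_upwards [self_mem_nhdsWithin] with t ht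
      have ht : t ≠ 0 := ht
      have h3 : t ^ a * (∑ p ∈ s', g p * (e p.1 (z + t • v) *
        (∏ j, (t⁻¹ * F j (z + t • v)) ^ p.2 j) * t ^ ((∑ j, p.2 j) - a))) = 0 := by
        rw [← hsum (z + t • v), Finset.mul_sum]
        apply Finset.sum_congr rfl
        intro p hp
        have hle := hmin p hp
        have h4 : t ^ (∑ j, p.2 j) = t ^ a * t ^ ((∑ j, p.2 j) - a) := by
          rw [← pow_add]; congr 1; omega
        have h5 : ∏ j, (F j (z + t • v)) ^ p.2 j =
            (∏ j, (t⁻¹ * F j (z + t • v)) ^ p.2 j) * t ^ (∑ j, p.2 j) := by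
          rw [← Finset.prod_pow_eq_pow_sum, ← Finset.prod_mul_distrib]
          apply Finset.prod_congr rfl
          intro j _
          rw [← mul_pow]; congr 1; field_simp
        rw [h5, h4]; ring
      exact (mul_eq_zero.1 h3).resolve_left (pow_ne_zero _ ht)
    exact tendsto_nhds_unique hlim (tendsto_const_nhds.congr' hzero.symm)
  -- polynomial vanishing everywhere
  set Q : MvPolynomial β ℝ := ∑ p ∈ s', MvPolynomial.monomial (Finsupp.equivFunOnFinite.symm p.2)
    (g p * e p.1 z * 0 ^ ((∑ j, p.2 j) - a)) with hQ
  have hQ0 : Q = 0 := by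
    apply MvPolynomial.funext
    intro y
    obtain ⟨v, rfl⟩ := hsurj y
    rw [map_zero, ← hev v, hQ, map_sum]
    apply Finset.sum_congr rfl
    intro p _
    rw [MvPolynomial.eval_monomial, Finsupp.prod_fintype _ _ (by simp)]
    simp only [Finsupp.equivFunOnFinite_symm_apply_apply]
    ring
  have hc := congrArg (MvPolynomial.coeff (Finsupp.equivFunOnFinite.symm p0.2)) hQ0
  rw [hQ, MvPolynomial.coeff_sum, MvPolynomial.coeff_zero, Finset.sum_eq_single p0] at hc
  · rw [MvPolynomial.coeff_monomial, if_pos rfl, he1 z hzZ] at hc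
    simp only [← ha, Nat.sub_self, pow_zero, mul_one] at hc
    exact (Finset.mem_filter.1 hp0).2 hc
  · intro p hp hpp
    rw [MvPolynomial.coeff_monomial]
    split_ifs with h
    · have h2 : p.2 = p0.2 := Finsupp.equivFunOnFinite.symm.injective h
      have h1 : (p.1 : E) ≠ z := by
        intro h1
        exact hpp (Prod.ext (Subtype.ext h1) h2)
      rw [he0 z hzZ p.1 p.1.2 h1]; simp
    · rfl
  · intro h; exact absurd hp0 h

lemma tendsto_choose (a b k : ℕ) :
    Tendsto (fun T : ℕ => (((a * T + b + k).choose k : ℕ) : ℝ) / (T : ℝ) ^ k) atTop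
      (𝓝 ((a : ℝ) ^ k / (k.factorial : ℝ))) := by
  have h1 : ∀ T : ℕ, (((a * T + b + k).choose k : ℕ) : ℝ) / (T : ℝ) ^ k =
      (∏ i ∈ Finset.range k, ((a * T + b + 1 + i : ℕ) : ℝ) / T) / k.factorial := by
    intro T
    have h := Nat.ascFactorial_eq_factorial_mul_choose (a * T + b) k
    rw [Nat.ascFactorial_eq_prod_range] at h
    rw [Finset.prod_div_distrib, Finset.prod_const, Finset.card_range, ← Nat.cast_prod, h]
    have : (k.factorial : ℝ) ≠ 0 := by positivity
    push_cast
    field_simp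
  simp only [h1]
  apply Tendsto.div_const
  have h2 : (a : ℝ) ^ k = ∏ i ∈ Finset.range k, (a : ℝ) := by simp
  rw [h2]
  apply tendsto_finsetProd
  intro i _
  have h3 : Tendsto (fun T : ℕ => (a : ℝ) + ((b + 1 + i : ℕ) : ℝ) / (T : ℝ)) atTop (𝓝 (a + 0)) :=
    tendsto_const_nhds.add (tendsto_const_div_atTop_nhds_zero_nat _)
  rw [add_zero] at h3
  refine h3.congr' ?_
  filter_upwards [eventually_gt_atTop 0] with T hT
  have : (T : ℝ) ≠ 0 := by positivity
  push_cast
  field_simp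
  ring

lemma limit_bound (n c k r : ℕ)
    (h : ∀ T : ℕ, n * ((T + r).choose r * (T + k).choose k) ≤
      (n + c * T + k).choose k * (n + T + r).choose r) : n ≤ c ^ k := by
  have e1 := tendsto_choose 1 0 r
  have e2 := tendsto_choose 1 0 k
  have e3 := tendsto_choose c n k
  have e4 := tendsto_choose 1 n r
  have hle := le_of_tendsto_of_tendsto' ((e1.mul e2).const_mul (n : ℝ)) (e3.mul e4) (by
    intro T
    have h' : ((n * ((T + r).choose r * (T + k).choose k) : ℕ) : ℝ) ≤
      (((n + c * T + k).choose k * (n + T + r).choose r : ℕ) : ℝ) := by exact_mod_cast h T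
    push_cast at h'
    rw [show 1 * T + 0 + r = T + r by ring, show 1 * T + 0 + k = T + k by ring,
      show c * T + n + k = n + c * T + k by ring, show 1 * T + n + r = n + T + r by ring,
      div_mul_div_comm, div_mul_div_comm, ← mul_div_assoc, mul_comm ((T : ℝ) ^ k)]
    exact div_le_div_of_nonneg_right h' (by positivity))
  have h1 : (0 : ℝ) < k.factorial := by positivity
  have h2 : (0 : ℝ) < r.factorial := by positivity
  simp only [Nat.cast_one, one_pow] at hle
  have : (n : ℝ) ≤ (c : ℝ) ^ k := by
    have := mul_le_mul_of_nonneg_right hle (mul_pos h1 h2).le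
    field_simp at this
    exact this
  exact_mod_cast this

variable {κ ι : Type} [Fintype κ] [Fintype ι]

lemma exists_sep (z z' : (κ → ℝ) × (ι → ℝ)) (h : z' ≠ z) :
    ∃ l ∈ V κ ι 1 1, l z = 1 ∧ l z' = 0 := by
  by_cases h1 : ∃ j, z'.1 j ≠ z.1 j
  · obtain ⟨j, hj⟩ := h1
    refine ⟨(z.1 j - z'.1 j)⁻¹ • ((fun x => x.1 j) - fun _ => z'.1 j),
      Submodule.smul_mem _ _ (Submodule.sub_mem _ (V_fst j le_rfl 1) (V_const _ 1 1)), ?_, ?_⟩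
    · have : z.1 j - z'.1 j ≠ 0 := sub_ne_zero.2 (Ne.symm hj)
      simp [this]
    · simp
  · have h2 : ∃ j, z'.2 j ≠ z.2 j := by
      by_contra! h2
      push Not at h1
      exact h (Prod.ext (funext h1) (funext h2))
    obtain ⟨j, hj⟩ := h2
    refine ⟨(z.2 j - z'.2 j)⁻¹ • ((fun x => x.2 j) - fun _ => z'.2 j),
      Submodule.smul_mem _ _ (Submodule.sub_mem _ (V_snd j 1 le_rfl) (V_const _ 1 1)), ?_, ?_⟩
    · have : z.2 j - z'.2 j ≠ 0 := sub_ne_zero.2 (Ne.symm hj)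
      simp [this]
    · simp

lemma exists_interp (Z : Finset ((κ → ℝ) × (ι → ℝ))) (z : (κ → ℝ) × (ι → ℝ)) :
    ∃ e ∈ V κ ι Z.card Z.card, e z = 1 ∧ ∀ z' ∈ Z, z' ≠ z → e z' = 0 := by
  classical
  choose! l hl1 hl2 hl3 using fun z' (h : z' ≠ z) => exists_sep z z' h
  refine ⟨∏ z' ∈ Z.erase z, l z', ?_, ?_, ?_⟩
  · have := V_prod (Z.erase z) (A := fun _ => 1) (B := fun _ => 1) (f := l)
      (fun a ha => hl1 a (Finset.ne_of_mem_erase ha))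
    refine V_mono ?_ ?_ this <;> simpa using Finset.card_le_card (Finset.erase_subset z Z)
  · rw [Finset.prod_apply]
    exact Finset.prod_eq_one fun a ha => hl2 a (Finset.ne_of_mem_erase ha)
  · intro z' hz' hne
    rw [Finset.prod_apply]
    exact Finset.prod_eq_zero (Finset.mem_erase.2 ⟨hne, hz'⟩) (hl3 z' hne)

/-- Bihomogeneous Bezout bound for nondegenerate zeros. -/
theorem bezout (D : ℕ) (F : κ ⊕ ι → (κ → ℝ) × (ι → ℝ) → ℝ)
    (hF1 : ∀ j, F (Sum.inl j) ∈ V κ ι D 1) (hF2 : ∀ i, F (Sum.inr i) ∈ V κ ι D 0)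
    (Z : Finset ((κ → ℝ) × (ι → ℝ))) (hF0 : ∀ z ∈ Z, ∀ j, F j z = 0)
    (hL : ∀ z ∈ Z, ∃ L : (κ → ℝ) × (ι → ℝ) →L[ℝ] (κ ⊕ ι → ℝ),
      HasFDerivAt (fun x j => F j x) L z ∧ Function.Surjective L) :
    Z.card ≤ (2 * D) ^ Fintype.card κ := by
  classical
  choose e he1 he2 he3 using exists_interp Z
  have hind := indep F Z e (fun z _ => V_cont (he1 z)) (fun z _ => he2 z)
    (fun z hz z' _ hne => he3 z' z hz (Ne.symm hne)) hF0 hL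
  apply limit_bound _ _ _ (Fintype.card ι)
  intro T
  let emb : Z × (Exps ι T × Exps κ T) → Z × (κ ⊕ ι → ℕ) :=
    fun p => (p.1, Sum.elim p.2.2.1 p.2.1.1)
  have hemb : Function.Injective emb := by
    rintro ⟨z, α, γ⟩ ⟨z', α', γ'⟩ h
    simp only [emb, Prod.mk.injEq] at h
    obtain ⟨h1, h2⟩ := h
    have h3 : (γ : κ → ℕ) = γ' := funext fun i => congrFun h2 (Sum.inl i)
    have h4 : (α : ι → ℕ) = α' := funext fun i => congrFun h2 (Sum.inr i)
    rw [h1, Subtype.ext h3, Subtype.ext h4]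
  have hc := V_card (A := Z.card + 2 * D * T) (B := Z.card + T) _ (fun p => ?_) (hind.comp emb hemb)
  · simp only [Fintype.card_prod, Fintype.card_coe, card_Exps] at hc
    exact hc
  · obtain ⟨z, ⟨α, hα⟩, ⟨γ, hγ⟩⟩ := p
    rw [mem_Exps] at hα hγ
    have h1 : (∏ j, F (Sum.inl j) ^ γ j) ∈ V κ ι (D * T) T := by
      refine V_mono ?_ ?_ (V_prod Finset.univ (fun j _ => V_pow (hF1 j) (γ j)))
      · rw [← Finset.sum_mul, mul_comm]; gcongr
      · simpa using hγ
    have h2 : (∏ i, F (Sum.inr i) ^ α i) ∈ V κ ι (D * T) 0 := by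
      refine V_mono ?_ ?_ (V_prod Finset.univ (fun j _ => V_pow (hF2 j) (α j)))
      · rw [← Finset.sum_mul, mul_comm]; gcongr
      · simp
    have h3 := V_mul (he1 z) (V_mul h1 h2)
    rw [show Z.card + (D * T + D * T) = Z.card + 2 * D * T by ring, add_zero] at h3
    convert h3 using 1
    ext x
    simp [emb, Fintype.prod_sum_type, Finset.prod_apply]

end GJ
namespace GJ
open Finset Filter Topology MeasureTheory

variable {κ ι : Type} [Fintype κ] [Fintype ι]

lemma hasFDerivAt_eval (q : MvPolynomial κ ℝ) (w : κ → ℝ) :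
    HasFDerivAt (fun w => MvPolynomial.eval w q)
      (∑ j, MvPolynomial.eval w (MvPolynomial.pderiv j q) •
        (ContinuousLinearMap.proj j : (κ → ℝ) →L[ℝ] ℝ)) w := by
  classical
  induction q using MvPolynomial.induction_on with
  | C a =>
    simp only [MvPolynomial.eval_C, MvPolynomial.pderiv_C, map_zero, zero_smul, Finset.sum_const_zero]
    exact hasFDerivAt_const _ _
  | add p q hp hq =>
    simp only [map_add, add_smul, Finset.sum_add_distrib]
    exact hp.add hq
  | mul_X p i hp =>
    have h1 : HasFDerivAt (fun w : κ → ℝ => w i)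
      (ContinuousLinearMap.proj i : (κ → ℝ) →L[ℝ] ℝ) w := hasFDerivAt_apply i w
    have h := hp.fun_mul h1
    simp only [map_mul, MvPolynomial.eval_X]
    refine h.congr_fderiv ?_
    ext v
    simp [Derivation.leibniz, MvPolynomial.pderiv_X, Pi.single_apply, add_mul,
      Finset.sum_add_distrib, apply_ite, ite_mul, Finset.mul_sum, mul_assoc]

lemma differentiable_eval (q : MvPolynomial κ ℝ) :
    Differentiable ℝ (fun w => MvPolynomial.eval w q) :=
  fun w => (hasFDerivAt_eval q w).differentiableAt

lemma differentiable_eval_comp {E : Type} [NormedAddCommGroup E] [NormedSpace ℝ E]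
    (q : MvPolynomial κ ℝ) {f : E → κ → ℝ} (hf : Differentiable ℝ f) :
    Differentiable ℝ (fun x => MvPolynomial.eval (f x) q) :=
  (differentiable_eval q).comp hf

lemma totalDegree_pderiv (j : κ) (q : MvPolynomial κ ℝ) :
    (MvPolynomial.pderiv j q).totalDegree ≤ q.totalDegree := by
  classical
  conv_lhs => rw [q.as_sum, map_sum]
  apply MvPolynomial.totalDegree_finsetSum_le
  intro m hm
  rw [MvPolynomial.pderiv_monomial]
  refine (MvPolynomial.totalDegree_monomial_le _ _).trans (le_trans ?_ (MvPolynomial.le_totalDegree hm))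
  exact Finsupp.degree_mono tsub_le_self

lemma eval_mem_V {q : MvPolynomial κ ℝ} {D : ℕ} (hq : q.totalDegree ≤ D) (B : ℕ) :
    (fun x : (κ → ℝ) × (ι → ℝ) => MvPolynomial.eval x.1 q) ∈ V κ ι D B := by
  have : (fun x : (κ → ℝ) × (ι → ℝ) => MvPolynomial.eval x.1 q) =
      ∑ m ∈ q.support, q.coeff m • mono (fun i => m i) 0 := by
    ext x
    rw [MvPolynomial.eval_eq', Finset.sum_apply]
    simp [mono]
  rw [this]
  refine Submodule.sum_mem _ fun m hm => Submodule.smul_mem _ _ (mono_mem ?_ (by simp))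
  refine le_trans ?_ ((MvPolynomial.le_totalDegree hm).trans hq)
  rw [Finsupp.sum_fintype _ _ (by simp)]

/-- The Lagrange map. -/
noncomputable def Phi (q : ι → MvPolynomial κ ℝ) (x : (κ → ℝ) × (ι → ℝ)) : (κ → ℝ) × (ι → ℝ) :=
  (fun j => x.1 j - ∑ i, x.2 i * MvPolynomial.eval x.1 (MvPolynomial.pderiv j (q i)),
    fun i => MvPolynomial.eval x.1 (q i))

lemma differentiable_Phi (q : ι → MvPolynomial κ ℝ) : Differentiable ℝ (Phi q) := by
  unfold Phi
  apply Differentiable.prodMk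
  · rw [differentiable_pi]
    intro j
    apply Differentiable.sub (by fun_prop)
    apply Differentiable.fun_sum
    intro i _
    exact Differentiable.mul (by fun_prop) (differentiable_eval_comp _ (by fun_prop))
  · rw [differentiable_pi]
    intro i
    exact differentiable_eval_comp _ (by fun_prop)

instance haar_prod {E E' : Type} [NormedAddCommGroup E] [NormedSpace ℝ E] [FiniteDimensional ℝ E]
    [MeasureSpace E] [BorelSpace E] [(volume : Measure E).IsAddHaarMeasure]
    [NormedAddCommGroup E'] [NormedSpace ℝ E'] [FiniteDimensional ℝ E']
    [MeasureSpace E'] [BorelSpace E'] [(volume : Measure E').IsAddHaarMeasure] :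
    (volume : Measure (E × E')).IsAddHaarMeasure :=
  Measure.prod.instIsAddHaarMeasure volume volume

lemma null_coord {E : Type} [NormedAddCommGroup E] [NormedSpace ℝ E] [FiniteDimensional ℝ E]
    [MeasurableSpace E] [BorelSpace E] (μ : Measure E) [μ.IsAddHaarMeasure]
    (l : E →ₗ[ℝ] ℝ) (h : l ≠ 0) : μ {x | l x = 0} = 0 := by
  have := Measure.addHaar_submodule μ (LinearMap.ker l) (by
    rw [Ne, LinearMap.ker_eq_top]; exact h)
  exact this

lemma generic2 (q : ι → MvPolynomial κ ℝ) :
    ∀ᵐ y : (κ → ℝ) × (ι → ℝ), ∀ x, Phi q x = y →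
      (fderiv ℝ (Phi q) x).det ≠ 0 ∧ ∀ i, x.2 i ≠ 0 := by
  classical
  have h1 : ∀ᵐ y : (κ → ℝ) × (ι → ℝ), y ∉ Phi q '' {x | (fderiv ℝ (Phi q) x).det = 0} := by
    apply measure_eq_zero_iff_ae_notMem.1
    apply addHaar_image_eq_zero_of_det_fderivWithin_eq_zero volume
      (f' := fun x => fderiv ℝ (Phi q) x)
    · intro x _
      exact (differentiable_Phi q x).hasFDerivAt.hasFDerivWithinAt
    · intro x hx; exact hx
  have h2 : ∀ᵐ y : (κ → ℝ) × (ι → ℝ), ∀ i, y ∉ Phi q '' {x | x.2 i = 0} := by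
    rw [ae_all_iff]
    intro i
    apply measure_eq_zero_iff_ae_notMem.1
    apply addHaar_image_eq_zero_of_differentiableOn_of_addHaar_eq_zero volume
      (differentiable_Phi q).differentiableOn
    refine null_coord volume ((LinearMap.proj i : (ι → ℝ) →ₗ[ℝ] ℝ).comp
      (LinearMap.snd ℝ (κ → ℝ) (ι → ℝ))) ?_
    intro h
    have := LinearMap.congr_fun h (0, Pi.single i 1)
    simp at this
  filter_upwards [h1, h2] with y hy1 hy2 x hx
  exact ⟨fun h => hy1 ⟨x, h, hx⟩, fun i h => hy2 i ⟨x, h, hx⟩⟩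

lemma count_sol (q : ι → MvPolynomial κ ℝ) (D : ℕ) (hD : 1 ≤ D) (hq : ∀ i, (q i).totalDegree ≤ D)
    (y : (κ → ℝ) × (ι → ℝ)) (Z : Finset ((κ → ℝ) × (ι → ℝ)))
    (hZ : ∀ z ∈ Z, Phi q z = y ∧ (fderiv ℝ (Phi q) z).det ≠ 0) :
    Z.card ≤ (2 * D) ^ Fintype.card κ := by
  let S : ((κ → ℝ) × (ι → ℝ)) ≃L[ℝ] (κ ⊕ ι → ℝ) :=
    (LinearEquiv.sumArrowLequivProdArrow κ ι ℝ ℝ).symm.toContinuousLinearEquiv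
  apply bezout D (fun j x => S (Phi q x - y) j)
  · intro j
    have : (fun x => S (Phi q x - y) (Sum.inl j)) =
      (fun x => x.1 j) - (∑ i, (fun x : (κ → ℝ) × (ι → ℝ) => x.2 i) *
        (fun x => MvPolynomial.eval x.1 (MvPolynomial.pderiv j (q i)))) - fun _ => y.1 j := by
      ext x
      simp [S, Phi]
      rfl
    rw [this]
    refine Submodule.sub_mem _ (Submodule.sub_mem _ (V_fst j hD 1) (Submodule.sum_mem _ ?_))
      (V_const _ _ _)
    intro i _
    have := V_mul (V_snd (κ := κ) i 0 le_rfl)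
      (eval_mem_V (ι := ι) ((totalDegree_pderiv j (q i)).trans (hq i)) 0)
    simpa using this
  · intro i
    have : (fun x => S (Phi q x - y) (Sum.inr i)) =
      (fun x => MvPolynomial.eval x.1 (q i)) - fun _ => y.2 i := by
      ext x
      simp [S, Phi]
      rfl
    rw [this]
    exact Submodule.sub_mem _ (eval_mem_V (hq i) 0) (V_const _ _ _)
  · intro z hz j
    simp [(hZ z hz).1]
  · intro z hz
    refine ⟨(S : _ →L[ℝ] _).comp (fderiv ℝ (Phi q) z), ?_, ?_⟩
    · exact S.toContinuousLinearMap.hasFDerivAt.comp z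
        ((differentiable_Phi q z).hasFDerivAt.sub_const y)
    · refine S.surjective.comp ?_
      have hu : IsUnit (LinearMap.det
        (fderiv ℝ (Phi q) z : ((κ → ℝ) × (ι → ℝ)) →ₗ[ℝ] ((κ → ℝ) × (ι → ℝ)))) := (hZ z hz).2.isUnit
      exact ((Module.End.isUnit_iff _).1 ((LinearMap.isUnit_iff_isUnit_det _).2 hu)).2

/-- Pulling back genericity along coordinate restriction. -/
lemma ae_restrict_coord {P : (κ → ℝ) × (ι → ℝ) → Prop} {ι' : Type} [Fintype ι']
    (f : ι → ι') (hf : Function.Injective f) (h : ∀ᵐ y : (κ → ℝ) × (ι → ℝ), P y) :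
    ∀ᵐ y : (κ → ℝ) × (ι' → ℝ), P (y.1, fun i => y.2 (f i)) := by
  let L : ((κ → ℝ) × (ι' → ℝ)) →ₗ[ℝ] ((κ → ℝ) × (ι → ℝ)) :=
    LinearMap.prodMap LinearMap.id (LinearMap.funLeft ℝ ℝ f)
  have hL : Function.Surjective L := by
    rintro ⟨a, b⟩
    obtain ⟨c, hc⟩ := LinearMap.funLeft_surjective_of_injective ℝ ℝ f hf b
    exact ⟨(a, c), by simp [L, hc]⟩
  obtain ⟨s, hs1, hs2, hs3⟩ := exists_measurable_superset_of_null h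
  have h3 : ∀ᵐ y : (κ → ℝ) × (ι → ℝ), y ∈ sᶜ := measure_eq_zero_iff_ae_notMem.1 hs3
  have h4 := (ae_comp_linearMap_mem_iff L volume volume hL hs2.compl).2 h3
  filter_upwards [h4] with y hy
  by_contra hc
  exact hy (hs1 hc)

end GJ
namespace GJ
open Finset Filter Topology MeasureTheory

variable {κ ι : Type} [Fintype κ] [Fintype ι]

/-- gradient -/
noncomputable def grad (q : MvPolynomial κ ℝ) (w : κ → ℝ) : κ → ℝ :=
  fun j => MvPolynomial.eval w (MvPolynomial.pderiv j q)

lemma differentiable_grad (q : MvPolynomial κ ℝ) : Differentiable ℝ (grad q) := by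
  rw [differentiable_pi]
  intro j
  exact differentiable_eval _

/-- parametrisation of the bad parameters -/
noncomputable def Gb [DecidableEq ι] (q : ι → MvPolynomial κ ℝ) (I : Finset ι) (i0 : ι)
    (p : (ι → κ → ℝ) × (ι → ℝ)) : ι → κ → ℝ :=
  fun i => if i = i0 then grad (q i0) (p.1 i0) +
    ∑ i ∈ I.erase i0, p.2 i • (grad (q i) (p.1 i0) - p.1 i) else p.1 i

noncomputable def Ge [DecidableEq ι] (q : ι → MvPolynomial κ ℝ) (I : Finset ι) (i0 : ι)
    (p : (ι → κ → ℝ) × (ι → ℝ)) : ι → ℝ :=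
  fun i => if i ∈ I then MvPolynomial.eval (p.1 i0) (q i) -
    ∑ j, Gb q I i0 p i j * p.1 i0 j else p.2 i

lemma differentiable_Gb [DecidableEq ι] (q : ι → MvPolynomial κ ℝ) (I : Finset ι) (i0 : ι) :
    Differentiable ℝ (Gb q I i0) := by
  have h0 : Differentiable ℝ (fun p : (ι → κ → ℝ) × (ι → ℝ) => p.1 i0) := by fun_prop
  unfold Gb
  rw [differentiable_pi]
  intro i
  split_ifs with h
  · have h1 : ∀ i, Differentiable ℝ (fun p : (ι → κ → ℝ) × (ι → ℝ) => grad (q i) (p.1 i0)) :=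
      fun i => (differentiable_grad (q i)).comp h0
    refine Differentiable.fun_add (h1 i0) ?_
    apply Differentiable.fun_sum
    intro i _
    have h2 := h1 i
    fun_prop
  · fun_prop

lemma differentiable_Ge [DecidableEq ι] (q : ι → MvPolynomial κ ℝ) (I : Finset ι) (i0 : ι) :
    Differentiable ℝ (Ge q I i0) := by
  have h0 : Differentiable ℝ (fun p : (ι → κ → ℝ) × (ι → ℝ) => p.1 i0) := by fun_prop
  have h1 := differentiable_Gb q I i0
  have h2 : ∀ i j, Differentiable ℝ (fun p => Gb q I i0 p i j) := fun i j =>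
    differentiable_pi.1 (differentiable_pi.1 h1 i) j
  unfold Ge
  rw [differentiable_pi]
  intro i
  split_ifs with h
  · refine Differentiable.sub (differentiable_eval_comp _ h0) ?_
    apply Differentiable.fun_sum
    intro j _
    exact (h2 i j).mul (by fun_prop)
  · fun_prop

instance haar_pi2 : (volume : Measure (ι → κ → ℝ)).IsAddHaarMeasure :=
  Measure.pi.isAddHaarMeasure _

lemma generic1 (q : ι → MvPolynomial κ ℝ) :
    ∀ᵐ p : (ι → κ → ℝ) × (ι → ℝ), ∀ w : κ → ℝ,
      LinearIndependent ℝ (fun i : {i // MvPolynomial.eval w (q i) - ∑ j, p.1 i j * w j = p.2 i} =>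
        grad (q i) w - p.1 i) := by
  classical
  have h : ∀ᵐ p : (ι → κ → ℝ) × (ι → ℝ), ∀ I : Finset ι, ∀ i0 : ι,
      p ∉ (fun p => (Gb q I i0 p, Ge q I i0 p)) '' {p | p.2 i0 = 0} := by
    rw [ae_all_iff]; intro I
    rw [ae_all_iff]; intro i0
    apply measure_eq_zero_iff_ae_notMem.1
    apply addHaar_image_eq_zero_of_differentiableOn_of_addHaar_eq_zero volume
      ((differentiable_Gb q I i0).prodMk (differentiable_Ge q I i0)).differentiableOn
    refine null_coord volume ((LinearMap.proj i0 : (ι → ℝ) →ₗ[ℝ] ℝ).comp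
      (LinearMap.snd ℝ (ι → κ → ℝ) (ι → ℝ))) ?_
    intro h
    have := LinearMap.congr_fun h (0, Pi.single i0 1)
    simp at this
  filter_upwards [h] with p hp w
  by_contra hli
  rw [Fintype.not_linearIndependent_iff] at hli
  obtain ⟨g, hg, ⟨i0, hi0⟩, hne⟩ := hli
  set I : Finset ι := Finset.univ.filter
    (fun i => MvPolynomial.eval w (q i) - ∑ j, p.1 i j * w j = p.2 i) with hI
  have hsub : ∀ i, i ∈ I ↔ MvPolynomial.eval w (q i) - ∑ j, p.1 i j * w j = p.2 i := by
    intro i; simp [hI]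
  let g' : ι → ℝ := fun i => if h : MvPolynomial.eval w (q i) - ∑ j, p.1 i j * w j = p.2 i
    then g ⟨i, h⟩ else 0
  have hg' : ∑ i ∈ I, g' i • (grad (q i) w - p.1 i) = 0 := by
    rw [← hg, Finset.sum_subtype I hsub]
    apply Finset.sum_congr rfl
    rintro ⟨i, hi⟩ _
    simp [g', hi]
  have hgi0 : g' i0 ≠ 0 := by simpa [g', hi0] using hne
  have hi0I : i0 ∈ I := (hsub i0).2 hi0
  refine hp I i0 ⟨(Function.update p.1 i0 w,
    fun i => if i = i0 then 0 else if i ∈ I then g' i / g' i0 else p.2 i), by simp, ?_⟩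
  have hb : Gb q I i0 (Function.update p.1 i0 w,
    fun i => if i = i0 then 0 else if i ∈ I then g' i / g' i0 else p.2 i) = p.1 := by
    funext i
    unfold Gb
    split_ifs with h
    · subst h
      simp only [Function.update_self]
      have h1 : ∑ x ∈ I.erase i, (if x = i then 0 else if x ∈ I then g' x / g' i else p.2 x) •
          (grad (q x) w - Function.update p.1 i w x) =
          ∑ x ∈ I.erase i, (g' i)⁻¹ • (g' x • (grad (q x) w - p.1 x)) := by
        apply Finset.sum_congr rfl
        intro x hx
        rw [Finset.mem_erase] at hx
        rw [if_neg hx.1, if_pos hx.2, Function.update_of_ne hx.1, smul_smul, div_eq_inv_mul]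
      rw [h1, ← Finset.smul_sum]
      rw [← Finset.add_sum_erase _ _ hi0I] at hg'
      rw [eq_neg_of_add_eq_zero_right hg', smul_neg, smul_smul, inv_mul_cancel₀ hgi0, one_smul]
      abel
    · simp [Function.update_of_ne h]
  refine Prod.ext hb ?_
  funext i
  simp only [Ge, hb, Function.update_self]
  by_cases hi : i ∈ I
  · rw [if_pos hi]; exact (hsub i).1 hi
  · have : i ≠ i0 := fun h => hi (h ▸ hi0I)
    simp [hi, this]

/-- the perturbed polynomial -/
noncomputable def pert (q : MvPolynomial κ ℝ) (b : κ → ℝ) : MvPolynomial κ ℝ :=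
  q - ∑ j, MvPolynomial.C (b j) * MvPolynomial.X j

lemma eval_pert (q : MvPolynomial κ ℝ) (b w : κ → ℝ) :
    MvPolynomial.eval w (pert q b) = MvPolynomial.eval w q - ∑ j, b j * w j := by
  simp [pert]

lemma grad_pert (q : MvPolynomial κ ℝ) (b w : κ → ℝ) :
    grad (pert q b) w = grad q w - b := by
  classical
  funext j
  simp [pert, grad, MvPolynomial.pderiv_X, Pi.single_apply, Derivation.leibniz, apply_ite]

lemma totalDegree_pert (q : MvPolynomial κ ℝ) (b : κ → ℝ) (D : ℕ) (hD : 1 ≤ D)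
    (hq : q.totalDegree ≤ D) : (pert q b).totalDegree ≤ D := by
  refine (MvPolynomial.totalDegree_sub _ _).trans (max_le hq ?_)
  apply MvPolynomial.totalDegree_finsetSum_le
  intro j _
  refine (MvPolynomial.totalDegree_mul _ _).trans ?_
  simpa using hD

lemma generic1' (q : ι → MvPolynomial κ ℝ) :
    ∀ᵐ b : ι → κ → ℝ, ∀ᵐ e : ι → ℝ, ∀ w : κ → ℝ,
      LinearIndependent ℝ (fun i : {i // MvPolynomial.eval w (pert (q i) (b i)) = e i} =>
        grad (pert (q i) (b i)) w) := by
  have h := Measure.ae_ae_of_ae_prod (μ := (volume : Measure (ι → κ → ℝ)))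
    (ν := (volume : Measure (ι → ℝ))) (generic1 q)
  filter_upwards [h] with b hb
  filter_upwards [hb] with e he w
  have := he w
  simp only [grad_pert]
  have h3 : (fun i => MvPolynomial.eval w (q i) - ∑ j, b i j * w j = e i) =
    fun i => MvPolynomial.eval w (pert (q i) (b i)) = e i := by
    funext i; rw [eval_pert]
  change LinearIndependent ℝ (fun i : Subtype (fun i => MvPolynomial.eval w (q i) - ∑ j, b i j * w j = e i) => _) at this
  rw [h3] at this
  exact this

lemma exists_dual {α : Type} [Fintype α] [DecidableEq α] (g : α → κ → ℝ) (hg : LinearIndependent ℝ g) :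
    ∃ v : α → κ → ℝ, ∀ i j, g i ⬝ᵥ v j = if i = j then 1 else 0 := by
  classical
  have hr := hg.rank_matrix (M := Matrix.of g)
  have hs : Function.Surjective (Matrix.mulVecLin (Matrix.of g)) := by
    rw [← LinearMap.range_eq_top]
    apply Submodule.eq_top_of_finrank_eq
    rw [Module.finrank_fintype_fun_eq_card]
    exact hr
  choose v hv using fun j : α => hs (Pi.single j 1)
  refine ⟨v, fun i j => ?_⟩
  have := congrFun (hv j) i
  simpa [Matrix.mulVec, Pi.single_apply] using this

lemma farkas {α : Type} [Fintype α] (g : α → κ → ℝ) (hg : LinearIndependent ℝ g)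
    (sg : α → ℝ) (hsg : ∀ i, sg i * sg i = 1) (u : κ → ℝ)
    (h : ∀ v : κ → ℝ, (∀ i, 0 < sg i * (g i ⬝ᵥ v)) → 0 ≤ u ⬝ᵥ v) :
    ∃ l : α → ℝ, u = ∑ i, l i • g i ∧ ∀ i, 0 ≤ sg i * l i := by
  classical
  obtain ⟨v, hv⟩ := exists_dual g hg
  have hcomb : ∀ (c : α → ℝ) i, g i ⬝ᵥ (∑ j, c j • v j) = c i := by
    intro c i
    simp [dotProduct_sum, hv]
  have hker : ∀ x : κ → ℝ, (∀ i, g i ⬝ᵥ x = 0) → u ⬝ᵥ x = 0 := by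
    intro x hx
    have h1 : ∀ t : ℝ, 0 ≤ u ⬝ᵥ (∑ j, sg j • v j) + t * (u ⬝ᵥ x) := by
      intro t
      have := h ((∑ j, sg j • v j) + t • x) (by
        intro i
        rw [dotProduct_add, hcomb, dotProduct_smul, hx i, smul_zero, add_zero, hsg]
        exact one_pos)
      rwa [dotProduct_add, dotProduct_smul, smul_eq_mul] at this
    by_contra hne
    have := h1 (-(u ⬝ᵥ (∑ j, sg j • v j) + 1) / (u ⬝ᵥ x))
    rw [div_mul_cancel₀ _ hne] at this
    linarith
  refine ⟨fun i => u ⬝ᵥ v i, ?_, ?_⟩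
  · have h2 : ∀ x : κ → ℝ, u ⬝ᵥ x = (∑ i, (u ⬝ᵥ v i) • g i) ⬝ᵥ x := by
      intro x
      have := hker (x - ∑ j, (g j ⬝ᵥ x) • v j) (by
        intro i
        rw [dotProduct_sub, hcomb, sub_self])
      rw [dotProduct_sub, sub_eq_zero] at this
      rw [this, dotProduct_sum, sum_dotProduct]
      apply Finset.sum_congr rfl
      intro i _
      rw [dotProduct_smul, smul_dotProduct, smul_eq_mul, smul_eq_mul, mul_comm]
    funext j
    simpa using h2 (Pi.single j 1)
  · intro i
    have h3 : ∀ δ : ℝ, 0 < δ → 0 ≤ sg i * (u ⬝ᵥ v i) + δ * (∑ j, sg j * (u ⬝ᵥ v j)) := by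
      intro δ hδ
      have := h (∑ j, (sg j * ((if j = i then 1 else 0) + δ)) • v j) (by
        intro j
        rw [hcomb, ← mul_assoc, hsg, one_mul]
        split_ifs <;> positivity)
      rw [dotProduct_sum] at this
      refine this.trans (le_of_eq ?_)
      simp only [dotProduct_smul, smul_eq_mul]
      rw [Finset.mul_sum, ← Finset.add_sum_erase _ _ (Finset.mem_univ i),
        ← Finset.add_sum_erase (a := i) _ (fun j => δ * (sg j * (u ⬝ᵥ v j))) (Finset.mem_univ i)]
      have h4 : ∑ x ∈ Finset.univ.erase i, sg x * ((if x = i then 1 else 0) + δ) * (u ⬝ᵥ v x) =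
          ∑ x ∈ Finset.univ.erase i, δ * (sg x * (u ⬝ᵥ v x)) := by
        apply Finset.sum_congr rfl
        intro x hx
        rw [if_neg (Finset.ne_of_mem_erase hx)]; ring
      rw [h4]
      simp; ring
    by_contra! hneg
    set c := sg i * (u ⬝ᵥ v i)
    set d := ∑ j, sg j * (u ⬝ᵥ v j)
    have h5 := h3 (-c / (2 * (|d| + 1))) (by
      apply div_pos (by linarith) (by positivity))
    have h6 : -c / (2 * (|d| + 1)) * d ≤ -c / 2 := by
      rw [div_mul_eq_mul_div, div_le_div_iff₀ (by positivity) (by norm_num)]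
      nlinarith [le_abs_self d, abs_nonneg d]
    linarith

end GJ
namespace GJ
open Finset Filter Topology MeasureTheory

variable {κ ι : Type} [Fintype κ] [Fintype ι]

lemma tendsto_slope (q : MvPolynomial κ ℝ) (z v : κ → ℝ) :
    Tendsto (fun t : ℝ => t⁻¹ * (MvPolynomial.eval (z + t • v) q - MvPolynomial.eval z q))
      (𝓝[>] 0) (𝓝 (grad q z ⬝ᵥ v)) := by
  have h2 := ((hasFDerivAt_eval q z).hasLineDerivAt v)
  unfold HasLineDerivAt at h2
  rw [hasDerivAt_iff_tendsto_slope_zero] at h2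
  have h3 := h2.mono_left (nhdsGT_le_nhdsNE 0)
  simpa [dotProduct, grad] using h3

lemma continuous_eval' (q : MvPolynomial κ ℝ) : Continuous (fun w => MvPolynomial.eval w q) :=
  (differentiable_eval q).continuous

lemma exists_min (K : Set (κ → ℝ)) (hK : IsClosed K) (hne : K.Nonempty) (a : κ → ℝ) :
    ∃ z ∈ K, ∀ w ∈ K, (z - a) ⬝ᵥ (z - a) ≤ (w - a) ⬝ᵥ (w - a) := by
  obtain ⟨x0, hx0⟩ := hne
  have hc : Continuous (fun w : κ → ℝ => (w - a) ⬝ᵥ (w - a)) := by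
    unfold dotProduct; fun_prop
  set K' := K ∩ {w | (w - a) ⬝ᵥ (w - a) ≤ (x0 - a) ⬝ᵥ (x0 - a)} with hK'
  have hcl : IsClosed K' := hK.inter (isClosed_le hc continuous_const)
  have hb : Bornology.IsBounded K' := by
    refine Metric.isBounded_closedBall.subset (s := K')
      (t := Metric.closedBall a (Real.sqrt ((x0 - a) ⬝ᵥ (x0 - a)))) ?_
    rintro w ⟨_, hw⟩
    rw [Metric.mem_closedBall, dist_pi_le_iff (Real.sqrt_nonneg _)]
    intro j
    rw [Real.dist_eq]
    apply Real.abs_le_sqrt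
    refine le_trans ?_ hw
    have := Finset.single_le_sum (f := fun j => (w - a) j * (w - a) j)
      (fun i _ => mul_self_nonneg _) (Finset.mem_univ j)
    simpa [sq, dotProduct] using this
  obtain ⟨z, hz, hmin⟩ := (Metric.isCompact_of_isClosed_isBounded hcl hb).exists_isMinOn
    ⟨x0, hx0, by simp⟩ hc.continuousOn
  refine ⟨z, hz.1, fun w hw => ?_⟩
  rcases le_total ((w - a) ⬝ᵥ (w - a)) ((x0 - a) ⬝ᵥ (x0 - a)) with h | h
  · exact hmin ⟨hw, h⟩
  · exact le_trans hz.2 h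

lemma kkt (q : ι → MvPolynomial κ ℝ) (e : ι → ℝ) (sg : ι → ℝ) (hsg : ∀ i, sg i * sg i = 1)
    (hli : ∀ w : κ → ℝ, LinearIndependent ℝ
      (fun i : {i // MvPolynomial.eval w (q i) = e i} => grad (q i) w))
    (a w0 : κ → ℝ) (hw0 : ∀ i, 0 ≤ sg i * (MvPolynomial.eval w0 (q i) - e i)) :
    ∃ (z : κ → ℝ) (l : ι → ℝ), (∀ i, 0 ≤ sg i * (MvPolynomial.eval z (q i) - e i)) ∧
      (∀ i, MvPolynomial.eval z (q i) ≠ e i → l i = 0) ∧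
      (z - a = ∑ i, l i • grad (q i) z) ∧ ∀ i, 0 ≤ sg i * l i := by
  classical
  have hcl : IsClosed {w : κ → ℝ | ∀ i, 0 ≤ sg i * (MvPolynomial.eval w (q i) - e i)} := by
    simp only [Set.ofPred_forall]
    refine isClosed_iInter fun i => isClosed_le continuous_const ?_
    have := continuous_eval' (q i)
    fun_prop
  obtain ⟨z, hz, hmin⟩ := exists_min _ hcl ⟨w0, hw0⟩ a
  have hz' : ∀ i, 0 ≤ sg i * (MvPolynomial.eval z (q i) - e i) := hz
  obtain ⟨l, hl1, hl2⟩ := farkas (fun i : {i // MvPolynomial.eval z (q i) = e i} => grad (q i) z)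
    (hli z) (fun i => sg i) (fun i => hsg i) (z - a) (by
      intro v hv
      have hev : ∀ i, ∀ᶠ t : ℝ in 𝓝[>] 0, 0 ≤ sg i * (MvPolynomial.eval (z + t • v) (q i) - e i) := by
        intro i
        by_cases hi : MvPolynomial.eval z (q i) = e i
        · have h1 := ((tendsto_slope (q i) z v).const_mul (sg i)).eventually (lt_mem_nhds (hv ⟨i, hi⟩))
          filter_upwards [h1, self_mem_nhdsWithin] with t ht1 ht2
          have ht2 : 0 < t := ht2
          rw [hi] at ht1
          have : sg i * (MvPolynomial.eval (z + t • v) (q i) - e i) =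
            t * (sg i * (t⁻¹ * (MvPolynomial.eval (z + t • v) (q i) - e i))) := by
            field_simp
          rw [this]
          exact (mul_pos ht2 ht1).le
        · have hne : 0 < sg i * (MvPolynomial.eval z (q i) - e i) := by
            refine lt_of_le_of_ne (hz' i) (Ne.symm (mul_ne_zero ?_ (sub_ne_zero.2 hi)))
            intro h; have := hsg i; rw [h] at this; simp at this
          have hc : Continuous (fun t : ℝ => sg i * (MvPolynomial.eval (z + t • v) (q i) - e i)) := by
            have := (continuous_eval' (q i)).comp (f := fun t : ℝ => z + t • v) (by fun_prop)
            simp only [Function.comp_def] at this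
            fun_prop
          have h2 := (hc.tendsto 0).eventually (lt_mem_nhds (a := 0) (by simpa using hne))
          filter_upwards [h2.filter_mono nhdsWithin_le_nhds] with t ht
          exact ht.le
      have hev2 : ∀ᶠ t : ℝ in 𝓝[>] 0, 0 ≤ 2 * ((z - a) ⬝ᵥ v) + t * (v ⬝ᵥ v) := by
        filter_upwards [eventually_all.2 hev, self_mem_nhdsWithin] with t ht1 ht2
        have ht2 : 0 < t := ht2
        have h3 := hmin _ ht1
        have h4 : z + t • v - a = (z - a) + t • v := by abel
        rw [h4] at h3
        simp only [add_dotProduct, dotProduct_add, smul_dotProduct, dotProduct_smul, smul_eq_mul] at h3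
        rw [dotProduct_comm v (z - a)] at h3
        have h5 : 0 ≤ t * (2 * ((z - a) ⬝ᵥ v) + t * (v ⬝ᵥ v)) := by nlinarith
        exact nonneg_of_mul_nonneg_right h5 ht2
      have hlim : Tendsto (fun t : ℝ => 2 * ((z - a) ⬝ᵥ v) + t * (v ⬝ᵥ v)) (𝓝[>] 0)
          (𝓝 (2 * ((z - a) ⬝ᵥ v))) := by
        have : Continuous (fun t : ℝ => 2 * ((z - a) ⬝ᵥ v) + t * (v ⬝ᵥ v)) := by fun_prop
        have h := (this.tendsto 0).mono_left (nhdsWithin_le_nhds (s := Set.Ioi 0))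
        simpa using h
      have := ge_of_tendsto hlim hev2
      linarith)
  refine ⟨z, fun i => if h : MvPolynomial.eval z (q i) = e i then l ⟨i, h⟩ else 0, hz', ?_, ?_, ?_⟩
  · intro i hi; simp [hi]
  · rw [hl1]
    rw [← Finset.sum_filter_add_sum_filter_not (s := (univ : Finset ι))
      (fun i => MvPolynomial.eval z (q i) = e i)]
    rw [Finset.sum_eq_zero (s := univ.filter (fun i => ¬ MvPolynomial.eval z (q i) = e i)), add_zero]
    · rw [Finset.sum_subtype (p := fun i => MvPolynomial.eval z (q i) = e i) _ (by simp)]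
      apply Finset.sum_congr rfl
      rintro ⟨i, hi⟩ _
      simp [hi]
    · intro i hi
      have := (Finset.mem_filter.1 hi).2
      simp [this]
  · intro i
    by_cases hi : MvPolynomial.eval z (q i) = e i
    · simpa [hi] using hl2 ⟨i, hi⟩
    · simp [hi]

end GJ
namespace GJ
open Finset Filter Topology MeasureTheory

variable {κ ι : Type} [Fintype κ] [Fintype ι]

/-- the sign attached to a Boolean -/
def sgn (b : Bool) : ℝ := if b then 1 else -1

lemma sgn_mul_self (b : Bool) : sgn b * sgn b = 1 := by
  cases b <;> simp [sgn]

lemma abs_sgn (b : Bool) : |sgn b| = 1 := by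
  cases b <;> simp [sgn]

lemma sgn_inj {b b' : Bool} {c : ℝ} (hc : c ≠ 0) (h : 0 ≤ sgn b * c) (h' : 0 ≤ sgn b' * c) :
    b = b' := by
  rcases lt_or_gt_of_ne hc with hc | hc <;> cases b <;> cases b' <;> simp [sgn] at h h' ⊢ <;> linarith

lemma warren (q : ι → MvPolynomial κ ℝ) (D : ℕ) (hD : 1 ≤ D) (hq : ∀ i, (q i).totalDegree ≤ D)
    (Sg : Finset (ι → Bool)) (w : (ι → Bool) → κ → ℝ)
    (hw : ∀ σ ∈ Sg, ∀ i, 0 < sgn (σ i) * MvPolynomial.eval (w σ) (q i)) :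
    Sg.card ≤ (2 * D) ^ Fintype.card κ *
      ∑ r ∈ Finset.range (Fintype.card κ + 1), (Fintype.card ι).choose r := by
  classical
  obtain ⟨η, hη, hη0⟩ : ∃ η : ℝ, (∀ σ ∈ Sg, ∀ i,
      η < sgn (σ i) * MvPolynomial.eval (w σ) (q i)) ∧ 0 < η := by
    have h : ∀ᶠ η : ℝ in 𝓝[>] 0, ∀ σ ∈ Sg, ∀ i,
        η < sgn (σ i) * MvPolynomial.eval (w σ) (q i) := by
      rw [Filter.eventually_all_finset]
      intro σ hσ
      rw [Filter.eventually_all]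
      intro i
      exact (gt_mem_nhds (hw σ hσ i)).filter_mono nhdsWithin_le_nhds
    exact (h.and self_mem_nhdsWithin).exists
  -- choose the linear perturbation
  obtain ⟨b, hb, hbU⟩ := (Measure.dense_of_ae (generic1' q)).exists_mem_open
    (U := ⋂ σ ∈ Sg, ⋂ i, {b : ι → κ → ℝ | |∑ j, b i j * w σ j| < η / 2})
    (by
      refine isOpen_biInter_finset fun σ _ => isOpen_iInter_of_finite fun i =>
        isOpen_lt (by fun_prop) continuous_const)
    ⟨0, by simp [hη0]⟩
  simp only [Set.mem_iInter, Set.mem_ofPred_eq] at hbU hb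
  set Q : ι → MvPolynomial κ ℝ := fun i => pert (q i) (b i) with hQ
  have hQD : ∀ i, (Q i).totalDegree ≤ D := fun i => totalDegree_pert _ _ _ hD (hq i)
  have hg1 : ∀ᵐ y : (κ → ℝ) × (ι → ℝ), ∀ w : κ → ℝ,
      LinearIndependent ℝ (fun i : {i // MvPolynomial.eval w (Q i) = y.2 i} => grad (Q i) w) :=
    Measure.quasiMeasurePreserving_snd.ae hb
  have hg2 : ∀ᵐ y : (κ → ℝ) × (ι → ℝ), ∀ I : Finset ι,
      ∀ x : (κ → ℝ) × (I → ℝ), Phi (fun i : I => Q i) x = (y.1, fun i : I => y.2 i) →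
      (fderiv ℝ (Phi (fun i : I => Q i)) x).det ≠ 0 ∧ ∀ i, x.2 i ≠ 0 := by
    rw [ae_all_iff]
    intro I
    exact ae_restrict_coord (fun i : I => (i : ι)) Subtype.val_injective
      (generic2 (fun i : I => Q i))
  obtain ⟨⟨a, e⟩, hae, heU⟩ := (Measure.dense_of_ae (hg1.and hg2)).exists_mem_open
    (U := ⋂ i, {y : (κ → ℝ) × (ι → ℝ) | |y.2 i| < η / 2})
    (isOpen_iInter_of_finite fun i => isOpen_lt (by fun_prop) continuous_const)
    ⟨0, by simp [hη0]⟩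
  obtain ⟨hli, hgen⟩ := hae
  simp only [Set.mem_iInter, Set.mem_ofPred_eq] at heU hli hgen
  have hk : ∀ σ, ∃ (z : κ → ℝ) (l : ι → ℝ), σ ∈ Sg →
      (∀ i, 0 ≤ sgn (σ i) * (MvPolynomial.eval z (Q i) - e i)) ∧
      (∀ i, MvPolynomial.eval z (Q i) ≠ e i → l i = 0) ∧
      (z - a = ∑ i, l i • grad (Q i) z) ∧ ∀ i, 0 ≤ sgn (σ i) * l i := by
    intro σ
    by_cases hσ : σ ∈ Sg
    · obtain ⟨z, l, h⟩ := kkt Q e (fun i => sgn (σ i)) (fun i => sgn_mul_self _) hli a (w σ) (by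
        intro i
        have h1 := hη σ hσ i
        have h2 := hbU σ hσ i
        have h3 := heU i
        have h4 : sgn (σ i) * (∑ j, b i j * w σ j) ≤ |∑ j, b i j * w σ j| := by
          refine (le_abs_self _).trans ?_
          rw [abs_mul, abs_sgn, one_mul]
        have h5 : sgn (σ i) * e i ≤ |e i| := by
          refine (le_abs_self _).trans ?_
          rw [abs_mul, abs_sgn, one_mul]
        simp only [hQ, eval_pert, mul_sub]
        linarith)
      exact ⟨z, l, fun _ => h⟩
    · exact ⟨0, 0, fun h => absurd h hσ⟩
  choose z l hzl using hk
  let I : (ι → Bool) → Finset ι := fun σ => univ.filter (fun i => MvPolynomial.eval (z σ) (Q i) = e i)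
  have hmemI : ∀ σ i, i ∈ I σ ↔ MvPolynomial.eval (z σ) (Q i) = e i := by
    intro σ i; simp [I]
  have hIcard : ∀ σ, (I σ).card ≤ Fintype.card κ := by
    intro σ
    have h1 := (hli (z σ)).fintype_card_le_finrank
    rw [Module.finrank_fintype_fun_eq_card] at h1
    refine le_trans (le_of_eq ?_) h1
    rw [Fintype.card_subtype]
  have hphi : ∀ σ ∈ Sg, Phi (fun i : I σ => Q i) (z σ, fun i : I σ => l σ i) =
      (a, fun i : I σ => e i) := by
    intro σ hσ
    obtain ⟨_, h2, h3, _⟩ := hzl σ hσ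
    refine Prod.ext ?_ ?_
    · funext j
      have h4 := congrFun h3 j
      simp only [Pi.sub_apply, Finset.sum_apply, Pi.smul_apply, smul_eq_mul] at h4
      have h5 : ∑ i, l σ i * grad (Q i) (z σ) j = ∑ i ∈ I σ, l σ i * grad (Q i) (z σ) j := by
        symm
        apply Finset.sum_subset (Finset.subset_univ _)
        intro i _ hi
        rw [hmemI] at hi
        rw [h2 i hi, zero_mul]
      rw [h5, ← Finset.sum_coe_sort] at h4
      simp only [Phi]
      simp only [grad] at h4
      linarith
    · funext i
      exact (hmemI σ i).1 i.2
  let t : Finset (Finset ι) := (Finset.range (Fintype.card κ + 1)).biUnion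
    (fun r => Finset.powersetCard r univ)
  have hmaps : Set.MapsTo I (Sg : Set (ι → Bool)) (t : Set (Finset ι)) := by
    intro σ _
    simp only [t, Finset.coe_biUnion, Set.mem_iUnion, Finset.mem_coe, Finset.mem_powersetCard]
    exact ⟨(I σ).card, by simpa [Nat.lt_succ_iff] using hIcard σ, Finset.subset_univ _, rfl⟩
  have hfib : ∀ J ∈ t, (Sg.filter (fun σ => I σ = J)).card ≤ (2 * D) ^ Fintype.card κ := by
    intro J _
    let X : (ι → Bool) → (κ → ℝ) × (J → ℝ) := fun σ => (z σ, fun i => l σ i)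
    have hXphi : ∀ σ ∈ Sg.filter (fun σ => I σ = J),
        Phi (fun i : J => Q i) (X σ) = (a, fun i : J => e i) := by
      intro σ hσ
      obtain ⟨h1, h2⟩ := Finset.mem_filter.1 hσ
      subst h2
      exact hphi σ h1
    have hinj : Set.InjOn X (Sg.filter (fun σ => I σ = J) : Finset (ι → Bool)) := by
      intro σ hσ σ' hσ' hX
      have hp := hXphi σ hσ
      obtain ⟨h1, h2⟩ := Finset.mem_filter.1 (Finset.mem_coe.1 hσ)
      obtain ⟨h1', h2'⟩ := Finset.mem_filter.1 (Finset.mem_coe.1 hσ')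
      have hz : z σ = z σ' := congrArg Prod.fst hX
      have hl : ∀ i : J, l σ i = l σ' i := fun i => congrFun (congrArg Prod.snd hX) i
      obtain ⟨ha, _, _, hd⟩ := hzl σ h1
      obtain ⟨ha', _, _, hd'⟩ := hzl σ' h1'
      funext i
      by_cases hi : i ∈ J
      · have hne := (hgen J _ hp).2 ⟨i, hi⟩
        refine sgn_inj (c := l σ i) hne (hd i) ?_
        rw [hl ⟨i, hi⟩]; exact hd' i
      · have hne : MvPolynomial.eval (z σ) (Q i) ≠ e i := by
          rw [← h2, hmemI] at hi; exact hi
        refine sgn_inj (sub_ne_zero.2 hne) (ha i) ?_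
        rw [hz]; exact ha' i
    rw [← Finset.card_image_of_injOn hinj]
    apply count_sol (fun i : J => Q i) D hD (fun i => hQD i) (a, fun i : J => e i)
    intro x hx
    obtain ⟨σ, hσ, rfl⟩ := Finset.mem_image.1 hx
    exact ⟨hXphi σ hσ, (hgen J _ (hXphi σ hσ)).1⟩
  rw [Finset.card_eq_sum_card_fiberwise hmaps]
  refine (Finset.sum_le_card_nsmul _ _ _ hfib).trans ?_
  rw [smul_eq_mul, mul_comm]
  refine Nat.mul_le_mul_left _ ?_
  refine Finset.card_biUnion_le.trans (le_of_eq ?_)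
  simp [Finset.card_powersetCard]

end GJ
namespace GJ
open Finset Filter Topology

lemma sum_choose_le (M k : ℕ) (hk : 1 ≤ k) (hkM : k ≤ M) :
    (∑ r ∈ Finset.range (k + 1), (M.choose r : ℝ)) ≤ (Real.exp 1 * M / k) ^ k := by
  have hk0 : (0 : ℝ) < k := by exact_mod_cast hk
  have hM0 : (0 : ℝ) < M := by exact_mod_cast hk.trans hkM
  have hkM' : (k : ℝ) ≤ M := by exact_mod_cast hkM
  set x : ℝ := k / M with hx
  have hx0 : 0 < x := by positivity
  have hx1 : x ≤ 1 := by rw [hx, div_le_one hM0]; exact hkM'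
  have h1 : x ^ k * (∑ r ∈ Finset.range (k + 1), (M.choose r : ℝ)) ≤ Real.exp 1 ^ k := by
    calc x ^ k * (∑ r ∈ Finset.range (k + 1), (M.choose r : ℝ))
        ≤ ∑ r ∈ Finset.range (k + 1), x ^ r * (M.choose r : ℝ) := by
          rw [Finset.mul_sum]
          apply Finset.sum_le_sum
          intro r hr
          refine mul_le_mul_of_nonneg_right ?_ (by positivity)
          exact pow_le_pow_of_le_one hx0.le hx1 (Nat.lt_succ_iff.1 (Finset.mem_range.1 hr))
      _ ≤ ∑ r ∈ Finset.range (M + 1), x ^ r * (M.choose r : ℝ) := by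
          apply Finset.sum_le_sum_of_subset_of_nonneg
          · intro r; simp only [Finset.mem_range]; omega
          · intros; positivity
      _ = (x + 1) ^ M := by
          rw [add_pow]; simp
      _ ≤ (Real.exp x) ^ M := by
          gcongr
          exact Real.add_one_le_exp x
      _ = Real.exp 1 ^ k := by
          rw [← Real.exp_nat_mul, ← Real.exp_nat_mul, hx]
          congr 1
          field_simp
  have h2 : Real.exp 1 * M / k = Real.exp 1 / x := by
    rw [hx]; field_simp
  rw [h2, div_pow, le_div_iff₀ (by positivity), mul_comm]
  exact h1

lemma numeric (m k s d : ℕ) (hk : 1 ≤ k) (hs : 1 ≤ s) (hd : 1 ≤ d)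
    (h : 2 ^ m ≤ (2 * (2 * d)) ^ k * ∑ r ∈ Finset.range (k + 1), (s * m).choose r) :
    (m : ℝ) ≤ 2 * k * Real.logb 2 (4 * Real.exp 1 * d * s) := by
  have hk1 : (1 : ℝ) ≤ k := by exact_mod_cast hk
  have hs1 : (1 : ℝ) ≤ s := by exact_mod_cast hs
  have hd1 : (1 : ℝ) ≤ d := by exact_mod_cast hd
  have he : (2 : ℝ) ≤ Real.exp 1 := by have := Real.add_one_le_exp 1; linarith
  set L : ℝ := 4 * Real.exp 1 * d * s with hL
  have hL8 : (8 : ℝ) ≤ L := by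
    have h1 : (1 : ℝ) ≤ d * s := by nlinarith
    have : L = 4 * Real.exp 1 * (d * s) := by rw [hL]; ring
    nlinarith
  have hlog3 : 3 ≤ Real.logb 2 L := by
    rw [Real.le_logb_iff_rpow_le (by norm_num) (by linarith)]
    norm_num
    exact hL8
  by_contra! hcon
  have hm6 : (6 : ℝ) * k < m := by nlinarith
  have hm0 : (0 : ℝ) < m := by linarith
  have hkM : k ≤ s * m := by
    have : (k : ℝ) ≤ s * m := by nlinarith
    exact_mod_cast this
  have h1 : (2 : ℝ) ^ m ≤ (L * (m / k)) ^ k := by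
    calc (2 : ℝ) ^ m ≤ (2 * (2 * d)) ^ k * ∑ r ∈ Finset.range (k + 1), ((s * m).choose r : ℝ) := by
          exact_mod_cast h
      _ ≤ (2 * (2 * d)) ^ k * (Real.exp 1 * (s * m : ℕ) / k) ^ k := by
          gcongr
          exact sum_choose_le _ _ hk hkM
      _ = (L * (m / k)) ^ k := by
          rw [← mul_pow, hL]; push_cast; congr 1; ring
  set u : ℝ := m / k with hu
  have hk0 : (0 : ℝ) < k := by linarith
  have hmu : (m : ℝ) = k * u := by rw [hu]; field_simp
  have hu6 : 6 < u := by rw [hu, lt_div_iff₀ hk0]; exact hm6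
  have hL0 : 0 < L := by linarith
  have hu0 : 0 < u := by linarith
  have h2 := Real.log_le_log (by positivity) h1
  rw [Real.log_pow, Real.log_pow, Real.log_mul hL0.ne' hu0.ne', hmu, mul_assoc] at h2
  have h3 : u * Real.log 2 ≤ Real.log L + Real.log u := le_of_mul_le_mul_left h2 hk0
  have hl2 := Real.log_two_gt_d9
  have h4 : Real.logb 2 L * 2 < u := by
    rw [hmu] at hcon
    by_contra! hc
    nlinarith
  have h5 : Real.log L = Real.logb 2 L * Real.log 2 := by
    rw [Real.logb, div_mul_cancel₀]; linarith
  have h6 : Real.log u ≤ u / 8 - 1 + 3 * Real.log 2 := by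
    have : u = (u / 8) * 2 ^ 3 := by ring
    conv_lhs => rw [this]
    rw [Real.log_mul (by positivity) (by positivity), Real.log_pow]
    have := Real.log_le_sub_one_of_pos (x := u / 8) (by positivity)
    push_cast
    linarith
  nlinarith

/-- substitution of `x` -/
noncomputable def subst {k N : ℕ} (p : MvPolynomial (Fin k ⊕ Fin N) ℝ) (x : Fin N → ℝ) :
    MvPolynomial (Fin k) ℝ :=
  ∑ m ∈ p.support, MvPolynomial.monomial (Finsupp.equivFunOnFinite.symm fun i => m (Sum.inl i))
    (p.coeff m * ∏ n, x n ^ m (Sum.inr n))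

lemma eval_subst {k N : ℕ} (p : MvPolynomial (Fin k ⊕ Fin N) ℝ) (x : Fin N → ℝ) (w : Fin k → ℝ) :
    MvPolynomial.eval w (subst p x) = MvPolynomial.eval (Sum.elim w x) p := by
  rw [subst, map_sum, MvPolynomial.eval_eq' (Sum.elim w x) p]
  apply Finset.sum_congr rfl
  intro m _
  rw [MvPolynomial.eval_monomial, Finsupp.prod_fintype _ _ (by simp), Fintype.prod_sum_type]
  simp
  ring

lemma totalDegree_subst {k N d : ℕ} (p : MvPolynomial (Fin k ⊕ Fin N) ℝ) (x : Fin N → ℝ)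
    (h : ∀ m ∈ p.support, ∑ i : Fin k, m (Sum.inl i) ≤ d) :
    (subst p x).totalDegree ≤ d := by
  apply MvPolynomial.totalDegree_finsetSum_le
  intro m hm
  refine (MvPolynomial.totalDegree_monomial_le _ _).trans (le_trans (le_of_eq ?_) (h m hm))
  rw [Finsupp.sum_fintype _ _ (by simp)]
  simp

lemma main_pos
    (s k N d : ℕ) (hk : 1 ≤ k) (hs : 1 ≤ s) (hd : 1 ≤ d)
    (τ : Fin s → MvPolynomial (Fin k ⊕ Fin N) ℝ)
    (hdeg : ∀ j, ∀ m ∈ (τ j).support, ∑ i : Fin k, m (Sum.inl i) ≤ d)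
    (sign : Fin s → Bool)
    (g : (Fin s → Prop) → Prop)
    (φ : (Fin k → ℝ) → (Fin N → ℝ) → Prop)
    (hφ : ∀ w x, φ w x ↔ g (fun j =>
      if sign j then MvPolynomial.eval (Sum.elim w x) (τ j) = 0
      else 0 < MvPolynomial.eval (Sum.elim w x) (τ j)))
    (S : Finset (Fin N → ℝ))
    (hS : ∀ T ⊆ S, ∃ w : Fin k → ℝ, (↑S : Set (Fin N → ℝ)) ∩ {x | φ w x} = ↑T) :
    (S.card : ℝ) ≤ 2 * k * Real.logb 2 (4 * Real.exp 1 * d * s) := by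
  classical
  have hS' : ∀ T, ∃ w : Fin k → ℝ, T ⊆ S → (↑S : Set (Fin N → ℝ)) ∩ {x | φ w x} = ↑T := by
    intro T
    by_cases hT : T ⊆ S
    · obtain ⟨w, hw⟩ := hS T hT
      exact ⟨w, fun _ => hw⟩
    · exact ⟨0, fun h => absurd h hT⟩
  choose W hW using hS'
  let p : Fin s × S → MvPolynomial (Fin k) ℝ := fun i => subst (τ i.1) i.2
  have hp : ∀ i, (p i).totalDegree ≤ d := fun i => totalDegree_subst _ _ (hdeg i.1)
  have hpe : ∀ i w, MvPolynomial.eval w (p i) = MvPolynomial.eval (Sum.elim w (i.2 : Fin N → ℝ)) (τ i.1) :=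
    fun i w => eval_subst _ _ _
  obtain ⟨δ, hδ, hδ0⟩ : ∃ δ : ℝ, (∀ T ∈ S.powerset, ∀ i,
      (MvPolynomial.eval (W T) (p i) ≠ 0 → δ < MvPolynomial.eval (W T) (p i) ^ 2) ∧
      (0 < MvPolynomial.eval (W T) (p i) → δ < MvPolynomial.eval (W T) (p i))) ∧ 0 < δ := by
    have h : ∀ᶠ δ : ℝ in 𝓝[>] 0, ∀ T ∈ S.powerset, ∀ i,
      (MvPolynomial.eval (W T) (p i) ≠ 0 → δ < MvPolynomial.eval (W T) (p i) ^ 2) ∧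
      (0 < MvPolynomial.eval (W T) (p i) → δ < MvPolynomial.eval (W T) (p i)) := by
      rw [Filter.eventually_all_finset]
      intro T _
      rw [Filter.eventually_all]
      intro i
      refine Filter.Eventually.and ?_ ?_
      · by_cases h : MvPolynomial.eval (W T) (p i) ≠ 0
        · have h0 : 0 < MvPolynomial.eval (W T) (p i) ^ 2 := by positivity
          filter_upwards [(gt_mem_nhds h0).filter_mono nhdsWithin_le_nhds] with δ hδ _
          exact hδ
        · exact Filter.Eventually.of_forall fun _ h' => absurd h' h
      · by_cases h : 0 < MvPolynomial.eval (W T) (p i)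
        · filter_upwards [(gt_mem_nhds h).filter_mono nhdsWithin_le_nhds] with δ hδ _
          exact hδ
        · exact Filter.Eventually.of_forall fun _ h' => absurd h' h
    exact (h.and self_mem_nhdsWithin).exists
  let q : Fin s × S → MvPolynomial (Fin k) ℝ := fun i =>
    if sign i.1 then MvPolynomial.C δ - p i ^ 2 else p i - MvPolynomial.C δ
  have hq : ∀ i, (q i).totalDegree ≤ 2 * d := by
    intro i
    have h1 := hp i
    simp only [q]
    split_ifs
    · refine (MvPolynomial.totalDegree_sub _ _).trans (max_le (by simp) ?_)
      refine (MvPolynomial.totalDegree_pow _ _).trans ?_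
      omega
    · refine (MvPolynomial.totalDegree_sub _ _).trans (max_le (by omega) (by simp))
  let atomP : Finset (Fin N → ℝ) → Fin s → (Fin N → ℝ) → Prop := fun T j x =>
    if sign j then MvPolynomial.eval (Sum.elim (W T) x) (τ j) = 0
      else 0 < MvPolynomial.eval (Sum.elim (W T) x) (τ j)
  let σ : Finset (Fin N → ℝ) → Fin s × S → Bool := fun T i => decide (atomP T i.1 i.2)
  have hσ : ∀ T ∈ S.powerset, ∀ i, 0 < sgn (σ T i) * MvPolynomial.eval (W T) (q i) := by
    intro T hT i
    obtain ⟨h1, h2⟩ := hδ T hT i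
    have hat : atomP T i.1 i.2 ↔ if sign i.1 then MvPolynomial.eval (W T) (p i) = 0
      else 0 < MvPolynomial.eval (W T) (p i) := by rw [hpe]
    simp only [σ, sgn, q, hat]
    by_cases hs : sign i.1 = true
    · simp only [hs, if_true]
      by_cases h0 : MvPolynomial.eval (W T) (p i) = 0
      · simp [h0, hδ0]
      · have := h1 h0
        simp [h0, this]
    · simp only [hs]
      by_cases h0 : 0 < MvPolynomial.eval (W T) (p i)
      · have := h2 h0
        simp [h0, this]
      · simp [h0]
        linarith
  have hinj : Set.InjOn σ (S.powerset : Set (Finset (Fin N → ℝ))) := by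
    intro T hT T' hT' h
    have hT : T ⊆ S := Finset.mem_powerset.1 (Finset.mem_coe.1 hT)
    have hT' : T' ⊆ S := Finset.mem_powerset.1 (Finset.mem_coe.1 hT')
    have key : ∀ x ∈ S, φ (W T) x ↔ φ (W T') x := by
      intro x hx
      rw [hφ, hφ]
      have : (fun j => atomP T j x) = fun j => atomP T' j x := by
        funext j
        have h3 := congrFun h (j, ⟨x, hx⟩)
        simp only [σ, decide_eq_decide] at h3
        exact propext h3
      exact iff_of_eq (congrArg g this)
    rw [← Finset.coe_inj, ← hW T hT, ← hW T' hT']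
    ext x
    simp only [Set.mem_inter_iff, Finset.mem_coe]
    exact and_congr_right fun hx => key x hx
  have hw : ∀ t, ∃ w : Fin k → ℝ, t ∈ S.powerset.image σ →
      ∀ i, 0 < sgn (t i) * MvPolynomial.eval w (q i) := by
    intro t
    by_cases ht : t ∈ S.powerset.image σ
    · obtain ⟨T, hT, rfl⟩ := Finset.mem_image.1 ht
      exact ⟨W T, fun _ => hσ T hT⟩
    · exact ⟨0, fun h => absurd h ht⟩
  choose w hw using hw
  have hwar := warren q (2 * d) (by omega) hq (S.powerset.image σ) w hw
  rw [Finset.card_image_of_injOn hinj, Finset.card_powerset] at hwar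
  simp only [Fintype.card_fin, Fintype.card_prod, Fintype.card_coe] at hwar
  exact numeric _ _ _ _ hk hs hd hwar

lemma main_indep {k N : ℕ}
    (φ : (Fin k → ℝ) → (Fin N → ℝ) → Prop) (hφ : ∀ w w' x, φ w x → φ w' x)
    (S : Finset (Fin N → ℝ))
    (hS : ∀ T ⊆ S, ∃ w : Fin k → ℝ, (↑S : Set (Fin N → ℝ)) ∩ {x | φ w x} = ↑T) :
    S.card = 0 := by
  obtain ⟨w1, h1⟩ := hS ∅ (Finset.empty_subset _)
  obtain ⟨w2, h2⟩ := hS S (Finset.Subset.refl _)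
  rw [Finset.card_eq_zero, Finset.eq_empty_iff_forall_notMem]
  intro x hx
  have hx2 : x ∈ (↑S : Set (Fin N → ℝ)) ∩ {x | φ w2 x} := by rw [h2]; exact hx
  have hx1 : x ∈ (↑S : Set (Fin N → ℝ)) ∩ {x | φ w1 x} := ⟨hx, hφ _ _ _ hx2.2⟩
  rw [h1] at hx1
  simp at hx1

end GJ

open MvPolynomial

theorem goldberg_jerrum_vc_bound
    (s k N d : ℕ)
    (τ : Fin s → MvPolynomial (Fin k ⊕ Fin N) ℝ)
    (hdeg : ∀ j, ∀ m ∈ (τ j).support, ∑ i : Fin k, m (Sum.inl i) ≤ d)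
    (sign : Fin s → Bool)
    (g : (Fin s → Prop) → Prop)
    (φ : (Fin k → ℝ) → (Fin N → ℝ) → Prop)
    (hφ : ∀ w x, φ w x ↔ g (fun j =>
      if sign j then MvPolynomial.eval (Sum.elim w x) (τ j) = 0
      else 0 < MvPolynomial.eval (Sum.elim w x) (τ j))) :
    ∀ S : Finset (Fin N → ℝ),
      (∀ T ⊆ S, ∃ w : Fin k → ℝ, (↑S : Set (Fin N → ℝ)) ∩ {x | φ w x} = ↑T) →
      (S.card : ℝ) ≤ 2 * k * Real.logb 2 (4 * Real.exp 1 * d * s) := by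
  intro S hS
  by_cases hpos : 1 ≤ k ∧ 1 ≤ s ∧ 1 ≤ d
  · exact GJ.main_pos s k N d hpos.1 hpos.2.1 hpos.2.2 τ hdeg sign g φ hφ S hS
  have h0 : S.card = 0 := by
    refine GJ.main_indep φ ?_ S hS
    intro w w' x h
    have hev : ∀ j, MvPolynomial.eval (Sum.elim w x) (τ j) =
        MvPolynomial.eval (Sum.elim w' x) (τ j) := by
      intro j
      have hs : 1 ≤ s := Nat.one_le_iff_ne_zero.2 (fun h => by subst h; exact j.elim0)
      by_cases hk : 1 ≤ k
      · have hd : d = 0 := by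
          by_contra hd
          exact hpos ⟨hk, hs, by omega⟩
        subst hd
        have h1 := GJ.totalDegree_subst (τ j) x (hdeg j)
        have h2 := MvPolynomial.totalDegree_eq_zero_iff_eq_C.1 (Nat.le_zero.1 h1)
        rw [← GJ.eval_subst, ← GJ.eval_subst, h2, eval_C, eval_C]
      · have hk : k = 0 := by omega
        subst hk
        rw [Subsingleton.elim w w']
    rw [hφ] at h ⊢
    simpa only [hev] using h
  have h1 : (2 * k * Real.logb 2 (4 * Real.exp 1 * d * s) : ℝ) = 0 := by
    have : k = 0 ∨ s = 0 ∨ d = 0 := by omega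
    rcases this with h | h | h <;> subst h <;> simp
  rw [h0, h1]
  simp
end
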